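/- arXiv:1304.7185 — 13 statements merged into one kernel-verified Lean document; each statement's English description precedes it below -/
import Mathlib

section
/- Let A and B be one-dimensional stochastic cellular automata with the same finite state set Q, with explicit global functions F and G. If their stochastic global functions coincide (S_F(c) = S_G(c) for every configuration c ∈ Q^ℤ), then their non-deterministic global functions coincide: for every c ∈ Q^ℤ, {F(c,s) : s ∈ R_A^ℤ} = {G(c,s) : s ∈ R_B^ℤ}. -/
open MeasureTheory

/-- A one-dimensional stochastic cellular automaton (SCA): states `Q`, random symbols `R`,
two finite neighbourhoods `V, V' ⊆ ℤ` and a local transition function `f`. -/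
structure SCA (Q R : Type*) where
  V : Finset ℤ
  V' : Finset ℤ
  f : (V → Q) → (V' → R) → Q

namespace SCA

variable {Q R : Type*}

/-- The explicit global function `F : Q^ℤ × R^ℤ → Q^ℤ` of an SCA. -/
def F (A : SCA Q R) (c : ℤ → Q) (s : ℤ → R) : ℤ → Q :=
  fun z => A.f (fun v => c (z + (v : ℤ))) (fun v => s (z + (v : ℤ)))

/-- The `t`-th iterate of the explicit global function:
`F^0(c) = c` and `F^{t+1}(c, s¹, …, s^{t+1}) = F (F^t(c, s¹, …, s^t), s^{t+1})`. -/
def iter (A : SCA Q R) : (t : ℕ) → (ℤ → Q) → (Fin t → (ℤ → R)) → (ℤ → Q)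
  | 0, c, _ => c
  | t + 1, c, s => A.F (A.iter t c fun i => s i.castSucc) (s (Fin.last t))

end SCA

/-- `ν` is the uniform product (Bernoulli) probability measure on `ℤ → R`:
a probability measure giving each finite cylinder its uniform probability. -/
def IsUniformProduct {R : Type*} [Fintype R] [MeasurableSpace R]
    (ν : Measure (ℤ → R)) : Prop :=
  IsProbabilityMeasure ν ∧
    ∀ (t : Finset ℤ) (g : ℤ → R),
      ν {s | ∀ i ∈ t, s i = g i} = (Fintype.card R : ENNReal)⁻¹ ^ t.card

theorem SCA.measurable_F {Q R : Type*} [MeasurableSpace Q]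
    [Fintype R] [MeasurableSpace R] [MeasurableSingletonClass R]
    (A : SCA Q R) (c : ℤ → Q) : Measurable (A.F c) := by
  refine measurable_pi_lambda _ fun z => ?_
  have h1 : Measurable (A.f (fun v => c (z + (v : ℤ)))) := measurable_of_finite _
  exact h1.comp (measurable_pi_lambda _ fun v => measurable_pi_apply _)

theorem SCA.range_sub {Q RA RB : Type*}
    [Fintype Q] [MeasurableSpace Q] [MeasurableSingletonClass Q]
    [Fintype RA] [Nonempty RA] [MeasurableSpace RA] [MeasurableSingletonClass RA]
    [Fintype RB] [MeasurableSpace RB] [MeasurableSingletonClass RB]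
    (A : SCA Q RA) (B : SCA Q RB)
    (νA : Measure (ℤ → RA)) (νB : Measure (ℤ → RB))
    (hA : IsUniformProduct νA) (c : ℤ → Q)
    (h : νA.map (A.F c) = νB.map (B.F c)) :
    Set.range (A.F c) ⊆ Set.range (B.F c) := by
  classical
  rintro _ ⟨s, rfl⟩
  let K : Finset ℤ → Set (ℤ → RB) := fun t => {u | ∀ i ∈ t, B.F c u i = A.F c s i}
  have hne : ∀ t, (K t).Nonempty := by
    intro t
    let C : Set (ℤ → Q) := {y | ∀ i ∈ t, y i = A.F c s i}
    have hC : MeasurableSet C := by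
      have : C = ⋂ i ∈ t, (fun y : ℤ → Q => y i) ⁻¹' {A.F c s i} := by
        ext y; simp [C]
      rw [this]
      exact Finset.measurableSet_biInter _ fun i _ =>
        measurable_pi_apply i (measurableSet_singleton _)
    have h1 : νA (A.F c ⁻¹' C) = νB (B.F c ⁻¹' C) := by
      rw [← Measure.map_apply (A.measurable_F c) hC, h,
        Measure.map_apply (B.measurable_F c) hC]
    let T : Finset ℤ := t.biUnion fun i => A.V'.image fun v => i + v
    have h2 : {u | ∀ i ∈ T, u i = s i} ⊆ A.F c ⁻¹' C := by
      intro u hu i hi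
      simp only [SCA.F]
      congr 1
      funext v
      exact hu _ (Finset.mem_biUnion.2 ⟨i, hi, Finset.mem_image.2 ⟨v, v.2, rfl⟩⟩)
    have h3 : νB (B.F c ⁻¹' C) ≠ 0 := by
      rw [← h1]
      intro h0
      have h4 := measure_mono_null h2 h0
      rw [hA.2 T s] at h4
      exact pow_ne_zero _ (ENNReal.inv_ne_zero.2 (ENNReal.natCast_ne_top _)) h4
    exact nonempty_of_measure_ne_zero h3
  letI : TopologicalSpace RB := ⊥
  haveI : DiscreteTopology RB := ⟨rfl⟩
  letI : TopologicalSpace Q := ⊥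
  haveI : DiscreteTopology Q := ⟨rfl⟩
  have hcont : ∀ i, Continuous fun u : ℤ → RB => B.F c u i := by
    intro i
    have h1 : Continuous (B.f (fun v => c (i + (v : ℤ)))) := continuous_of_discreteTopology
    exact h1.comp (continuous_pi fun v => continuous_apply _)
  have hcl : ∀ t, IsClosed (K t) := by
    intro t
    have : K t = ⋂ i ∈ t, (fun u : ℤ → RB => B.F c u i) ⁻¹' {A.F c s i} := by
      ext y; simp [K]
    rw [this]
    exact isClosed_biInter fun i _ => (isClosed_discrete _).preimage (hcont i)
  have hdir : Directed (· ⊇ ·) K := fun t t' =>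
    ⟨t ∪ t', fun u hu i hi => hu i (Finset.mem_union_left _ hi),
      fun u hu i hi => hu i (Finset.mem_union_right _ hi)⟩
  obtain ⟨u, hu⟩ := IsCompact.nonempty_iInter_of_directed_nonempty_isCompact_isClosed K hdir hne
    (fun t => (hcl t).isCompact) hcl
  refine ⟨u, funext fun i => ?_⟩
  exact Set.mem_iInter.1 hu {i} i (Finset.mem_singleton_self i)

/-- If two stochastic CA with the same state set have the same stochastic global function,
then their non-deterministic global functions coincide:
`{F(c,s) : s ∈ R_A^ℤ} = {G(c,s) : s ∈ R_B^ℤ}` for every configuration `c`. -/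
theorem stmt1 {Q RA RB : Type*}
    [Fintype Q] [Nonempty Q] [MeasurableSpace Q] [MeasurableSingletonClass Q]
    [Fintype RA] [Nonempty RA] [MeasurableSpace RA] [MeasurableSingletonClass RA]
    [Fintype RB] [Nonempty RB] [MeasurableSpace RB] [MeasurableSingletonClass RB]
    (A : SCA Q RA) (B : SCA Q RB)
    (νA : Measure (ℤ → RA)) (νB : Measure (ℤ → RB))
    (hA : IsUniformProduct νA) (hB : IsUniformProduct νB)
    (h : ∀ c : ℤ → Q, νA.map (A.F c) = νB.map (B.F c)) :
    ∀ c : ℤ → Q, Set.range (A.F c) = Set.range (B.F c) := by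
  intro c
  exact Set.Subset.antisymm (SCA.range_sub A B νA νB hA c (h c))
    (SCA.range_sub B A νB νA hB c (h c).symm)
end

section
/- Let F : Q^ℤ × R^ℤ → Q^ℤ be the explicit global function of a one-dimensional stochastic cellular automaton. If F is pre-injective (for all configurations c_1, c_2 ∈ Q^ℤ that differ in only finitely many cells and all s_1, s_2 ∈ R^ℤ, F(c_1,s_1) = F(c_2,s_2) implies c_1 = c_2), then F is surjective (for every c ∈ Q^ℤ there exist c' ∈ Q^ℤ and s ∈ R^ℤ with F(c',s) = c). -/
open MeasureTheory

/-- If the explicit global function of an SCA is pre-injective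
(on configurations differing in finitely many cells) then it is surjective. -/
theorem stmt5 {Q R : Type*} [Fintype Q] [Nonempty Q] [Fintype R] [Nonempty R]
    (A : SCA Q R)
    (hpre : ∀ c1 c2 : ℤ → Q, {z : ℤ | c1 z ≠ c2 z}.Finite →
      ∀ s1 s2 : ℤ → R, A.F c1 s1 = A.F c2 s2 → c1 = c2) :
    ∀ c : ℤ → Q, ∃ (c' : ℤ → Q) (s : ℤ → R), A.F c' s = c := by
  classical
  intro c
  by_contra hno
  obtain ⟨r0⟩ := ‹Nonempty R›
  obtain ⟨q0⟩ := ‹Nonempty Q›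
  let G : (ℤ → Q) → (ℤ → Q) := fun c' => A.F c' (fun _ => r0)
  have hG : ∀ c' z, G c' z = A.f (fun v => c' (z + (v : ℤ))) (fun _ => r0) := fun _ _ => rfl
  have hc : ∀ c', G c' ≠ c := fun c' h => hno ⟨c', _, h⟩
  -- orphan
  obtain ⟨I, hI⟩ : ∃ I : Finset ℤ, ∀ c', ∃ i ∈ I, G c' i ≠ c i := by
    letI : TopologicalSpace Q := ⊥
    haveI : DiscreteTopology Q := ⟨rfl⟩
    have hcont : Continuous G := by
      refine continuous_pi fun z => ?_
      have h1 : Continuous (fun b : A.V → Q => A.f b (fun _ => r0)) :=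
        continuous_of_discreteTopology
      exact h1.comp (continuous_pi fun v => continuous_apply _)
    have hcl : IsClosed (Set.range G) := (isCompact_range hcont).isClosed
    obtain ⟨I, u, hu, hsub⟩ := isOpen_pi_iff.1 hcl.isOpen_compl c
      (by rintro ⟨c', h⟩; exact hc c' h)
    refine ⟨I, fun c' => ?_⟩
    by_contra hcon
    push Not at hcon
    have : G c' ∈ (Set.range G)ᶜ := hsub (by
      intro i hi
      rw [hcon i hi]
      exact (hu i hi).2)
    exact this ⟨c', rfl⟩
  obtain ⟨m, hm⟩ : ∃ m : ℕ, ∀ i ∈ I, i.natAbs ≤ m :=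
    ⟨I.sup Int.natAbs, fun i hi => Finset.le_sup (f := Int.natAbs) hi⟩
  obtain ⟨r, hr⟩ : ∃ r : ℕ, ∀ i ∈ A.V, i.natAbs ≤ r :=
    ⟨A.V.sup Int.natAbs, fun i hi => Finset.le_sup (f := Int.natAbs) hi⟩
  obtain ⟨n, hn⟩ : ∃ n : ℕ, n = 2 * m + 1 := ⟨_, rfl⟩
  let w : Fin n → Q := fun j => c ((j : ℤ) - m)
  have horph : ∀ (c' : ℤ → Q) (p : ℤ), (fun j : Fin n => G c' (p + (j : ℕ))) ≠ w := by
    intro c' p h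
    obtain ⟨i, hi, hne⟩ := hI (fun z => c' (z + p + m))
    have := hm i hi
    have h2 := congrFun h ⟨(i + m).toNat, by omega⟩
    apply hne
    have e : (((i + m).toNat : ℕ) : ℤ) = i + m := by omega
    simp only [w, e] at h2
    rw [hG] at h2 ⊢
    rw [show i + (m : ℤ) - m = i by ring] at h2
    rw [← h2]
    congr 1
    funext v
    congr 1
    ring
  have hcard : ∀ k : ℕ, (Fintype.card Q ^ n) ^ k ≤
      (Fintype.card Q ^ n - 1) ^ k * (Fintype.card Q ^ r * Fintype.card Q ^ r) := by
    intro k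
    let D : Finset ℤ := Finset.Ico 0 ((n * k : ℕ) : ℤ)
    let em : (D → Q) → ℤ → Q := fun x z => if h : z ∈ D then x ⟨z, h⟩ else q0
    have hem : ∀ x z, z ∉ D → em x z = q0 := fun x z h => dif_neg h
    let Φ : (D → Q) → (Fin k → {b : Fin n → Q // b ≠ w}) × ((Fin r → Q) × (Fin r → Q)) :=
      fun x => (fun i => ⟨_, horph (em x) ((n * (i : ℕ) : ℕ) : ℤ)⟩,
        fun j => G (em x) (-r + (j : ℕ)), fun j => G (em x) ((n * k : ℕ) + (j : ℕ)))
    have hinj : Function.Injective Φ := by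
      intro x y hxy
      have h1 := congrArg Prod.fst hxy
      have h2 := congrArg (fun t => t.2.1) hxy
      have h3 := congrArg (fun t => t.2.2) hxy
      have hGe : G (em x) = G (em y) := by
        funext z
        by_cases ha : z < -r
        · rw [hG, hG]
          congr 1
          funext v
          have := hr v v.2
          rw [hem, hem] <;> simp only [D, Finset.mem_Ico] <;> omega
        by_cases hb : z < 0
        · have := congrFun h2 ⟨(z + r).toNat, by omega⟩
          have e : -(r : ℤ) + (((z + r).toNat : ℕ) : ℤ) = z := by omega
          simpa only [Φ, e] using this
        by_cases hd : z < (n * k : ℕ)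
        · lift z to ℕ using by omega
          have hd' : z < n * k := by exact_mod_cast hd
          have h4 := congrFun h1 ⟨z / n, Nat.div_lt_of_lt_mul hd'⟩
          have h5 := congrFun (congrArg Subtype.val h4) ⟨z % n, Nat.mod_lt _ (by omega)⟩
          have e : ((n * (z / n) : ℕ) : ℤ) + ((z % n : ℕ) : ℤ) = z := by
            exact_mod_cast Nat.div_add_mod z n
          simpa only [Φ, e] using h5
        by_cases he : z < (n * k : ℕ) + r
        · have := congrFun h3 ⟨(z - (n * k : ℕ)).toNat, by omega⟩
          have e : ((n * k : ℕ) : ℤ) + (((z - (n * k : ℕ)).toNat : ℕ) : ℤ) = z := by omega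
          simpa only [Φ, e] using this
        · rw [hG, hG]
          congr 1
          funext v
          have := hr v v.2
          rw [hem, hem] <;> simp only [D, Finset.mem_Ico] <;> omega
      have hxy' := hpre (em x) (em y) (D.finite_toSet.subset (by
        intro z hz
        by_contra hzD
        exact hz ((hem x z hzD).trans (hem y z hzD).symm))) _ _ hGe
      funext d
      have := congrFun hxy' d
      simpa [em] using this
    have := Fintype.card_le_of_injective Φ hinj
    have e1 : Fintype.card {b : Fin n → Q // b ≠ w} = Fintype.card Q ^ n - 1 := by
      simp [Fintype.card_subtype_compl]
    have e2 : Fintype.card (D → Q) = (Fintype.card Q ^ n) ^ k := by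
      rw [Fintype.card_fun, Fintype.card_coe, Int.card_Ico, ← pow_mul]
      congr 1
    rw [e2, Fintype.card_prod, Fintype.card_fun, e1] at this
    simpa using this
  have hq : 0 < Fintype.card Q := Fintype.card_pos_iff.2 ⟨q0⟩
  have ha : 0 < Fintype.card Q ^ n := pow_pos hq n
  have hC : 0 < Fintype.card Q ^ r * Fintype.card Q ^ r := by positivity
  generalize Fintype.card Q ^ n = a at *
  generalize Fintype.card Q ^ r * Fintype.card Q ^ r = C at *
  obtain ⟨b, rfl⟩ : ∃ b, a = b + 1 := ⟨a - 1, by omega⟩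
  simp only [Nat.add_sub_cancel] at hcard
  have hC' : (0 : ℝ) < C := by exact_mod_cast hC
  have hb' : (0 : ℝ) < (b : ℝ) + 1 := by positivity
  obtain ⟨k, hk⟩ := exists_pow_lt_of_lt_one (x := (1 / C : ℝ)) (y := (b / (b + 1) : ℝ))
    (by positivity) (by rw [div_lt_one hb']; linarith)
  have h := hcard k
  have h' : ((b : ℝ) + 1) ^ k ≤ (b : ℝ) ^ k * C := by exact_mod_cast h
  rw [div_pow, div_lt_div_iff₀ (by positivity) hC'] at hk
  linarith
end

section
/- Let F : Q^ℤ × R^ℤ → Q^ℤ be the explicit global function of a one-dimensional stochastic cellular automaton. If F is injective (for all configurations c_1, c_2 ∈ Q^ℤ and all s_1, s_2 ∈ R^ℤ, F(c_1,s_1) = F(c_2,s_2) implies c_1 = c_2), then F is deterministic, i.e. F(c,s) = F(c,s') for all c ∈ Q^ℤ and all s, s' ∈ R^ℤ. -/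
open MeasureTheory

/-- If the explicit global function of an SCA is injective then it is deterministic. -/
theorem stmt6 {Q R : Type*} [Fintype Q] [Nonempty Q] [Fintype R] [Nonempty R]
    (A : SCA Q R)
    (hinj : ∀ (c1 c2 : ℤ → Q) (s1 s2 : ℤ → R), A.F c1 s1 = A.F c2 s2 → c1 = c2) :
    ∀ (c : ℤ → Q) (s s' : ℤ → R), A.F c s = A.F c s' := by
  classical
  obtain ⟨r⟩ := ‹Nonempty R›
  suffices h : ∀ (c : ℤ → Q) (s : ℤ → R), A.F c s = A.F c (fun _ => r) by
    intro c s s'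
    rw [h c s, h c s']
  intro c s
  funext z
  obtain ⟨N, hN⟩ : ∃ N : ℕ, ∀ v ∈ A.V ∪ A.V', v.natAbs ≤ N :=
    ⟨(A.V ∪ A.V').sup Int.natAbs, fun v hv => Finset.le_sup (f := Int.natAbs) hv⟩
  let p : ℕ := 2 * N + 1
  have : NeZero p := ⟨by omega⟩
  have hsurj : Function.Surjective (fun x : ℤ => (x : ZMod p)) := ZMod.intCast_surjective
  let G : (ZMod p → Q) → (ZMod p → R) → (ZMod p → Q) := fun u w y =>
    A.f (fun v => u (y + ((v : ℤ) : ZMod p))) (fun v => w (y + ((v : ℤ) : ZMod p)))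
  have hG : ∀ u w, A.F (fun x => u (x : ZMod p)) (fun x => w (x : ZMod p))
      = fun x : ℤ => G u w (x : ZMod p) := by
    intro u w
    funext x
    simp [SCA.F, G]
  have hGinj : ∀ u1 u2 w1 w2, G u1 w1 = G u2 w2 → u1 = u2 := by
    intro u1 u2 w1 w2 h
    have h2 := hinj (fun x => u1 (x : ZMod p)) (fun x => u2 (x : ZMod p))
      (fun x => w1 (x : ZMod p)) (fun x => w2 (x : ZMod p)) (by rw [hG, hG, h])
    funext y
    obtain ⟨x, rfl⟩ := hsurj y
    exact congrFun h2 x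
  have hGs : Function.Surjective (fun u => G u (fun _ => r)) :=
    Finite.surjective_of_injective (fun u1 u2 h => hGinj u1 u2 (fun _ => r) (fun _ => r) h)
  have key : ∀ u w, G u w = G u (fun _ => r) := by
    intro u w
    obtain ⟨u', hu'⟩ := hGs (G u w)
    have h3 : u' = u := hGinj u' u (fun _ => r) w hu'
    subst h3
    exact hu'.symm
  let g : ZMod p → ℤ := fun y => z - N + ((y - ((z - N : ℤ) : ZMod p)).val : ℤ)
  have hg : ∀ v ∈ A.V ∪ A.V', g ((z : ZMod p) + ((v : ℤ) : ZMod p)) = z + v := by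
    intro v hv
    have h1 := hN v hv
    have h2 : (z : ZMod p) + (v : ZMod p) - ((z - N : ℤ) : ZMod p)
        = ((N + v : ℤ) : ZMod p) := by
      push_cast
      ring
    simp only [g]
    rw [h2, ZMod.val_intCast, Int.emod_eq_of_lt (by omega) (by omega)]
    ring
  have hk := congrFun (key (fun y => c (g y)) (fun y => s (g y))) (z : ZMod p)
  have e1 : (fun v : A.V => c (g ((z : ZMod p) + ((v : ℤ) : ZMod p))))
      = fun v : A.V => c (z + v) :=
    funext fun v => by rw [hg v (Finset.mem_union_left _ v.2)]
  have e2 : (fun v : A.V' => s (g ((z : ZMod p) + ((v : ℤ) : ZMod p))))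
      = fun v : A.V' => s (z + v) :=
    funext fun v => by rw [hg v (Finset.mem_union_right _ v.2)]
  simp only [G, e1, e2] at hk
  exact hk
end

section
/- Let F be the explicit global function of a one-dimensional correlation-free stochastic cellular automaton (CFCA) with local function f : Q^ρ × R → Q and neighborhood V = {v_1,…,v_ρ}. For q̄ ∈ Q^ρ and γ ∈ Q define P_f(q̄)(γ) = #{r ∈ R : f(q̄,r) = γ} / |R|. Then for every configuration c ∈ Q^ℤ, every z_0 ∈ ℤ and every finite word u ∈ Q^n, the measure of the cylinder [u]_{z_0} under the stochastic global function is the product of local probabilities: S_F(c)([u]_{z_0}) = ∏_{j=0}^{n-1} P_f(c_{z_0+j+v_1},…,c_{z_0+j+v_ρ})(u_j). -/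
open MeasureTheory

/-- A correlation-free stochastic cellular automaton (CFCA): an SCA with `V' = {0}`,
i.e. each cell uses only its own random symbol. -/
structure CFCA (Q R : Type*) where
  V : Finset ℤ
  f : (V → Q) → R → Q

namespace CFCA

variable {Q R : Type*}

/-- The explicit global function of a CFCA. -/
def F (A : CFCA Q R) (c : ℤ → Q) (s : ℤ → R) : ℤ → Q :=
  fun z => A.f (fun v => c (z + (v : ℤ))) (s z)

/-- The `t`-th iterate of the explicit global function of a CFCA. -/
def iter (A : CFCA Q R) : (t : ℕ) → (ℤ → Q) → (Fin t → (ℤ → R)) → (ℤ → Q)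
  | 0, c, _ => c
  | t + 1, c, s => A.F (A.iter t c fun i => s i.castSucc) (s (Fin.last t))

end CFCA

/-- For a correlation-free SCA, the probability of a cylinder under the stochastic global
function is the product of the local probabilities
`P_f(q̄)(γ) = #{r : f(q̄,r) = γ} / |R|`. -/
theorem stmt7 {Q R : Type*} [DecidableEq Q]
    [Fintype Q] [Nonempty Q] [MeasurableSpace Q] [MeasurableSingletonClass Q]
    [Fintype R] [Nonempty R] [MeasurableSpace R] [MeasurableSingletonClass R]
    (A : CFCA Q R) (ν : Measure (ℤ → R)) (hν : IsUniformProduct ν)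
    (c : ℤ → Q) (z0 : ℤ) (n : ℕ) (u : Fin n → Q) :
    (ν.map (A.F c)) {x : ℤ → Q | ∀ j : Fin n, x (z0 + (j : ℤ)) = u j}
      = ∏ j : Fin n,
          ((Finset.univ.filter fun r : R =>
              A.f (fun v => c (z0 + (j : ℤ) + (v : ℤ))) r = u j).card : ENNReal)
            / (Fintype.card R : ENNReal) := by
  classical
  have hmeas : Measurable (A.F c) := by
    refine measurable_pi_lambda _ fun z => ?_
    exact (measurable_of_countable (A.f fun v => c (z + (v : ℤ)))).comp (measurable_pi_apply z)
  have hset : MeasurableSet {x : ℤ → Q | ∀ j : Fin n, x (z0 + (j : ℤ)) = u j} := by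
    rw [Set.ofPred_forall]
    exact MeasurableSet.iInter fun j =>
      measurableSet_eq_fun (measurable_pi_apply (z0 + (j : ℤ))) measurable_const
  rw [Measure.map_apply hmeas hset]
  set T : Fin n → Finset R := fun j => Finset.univ.filter fun r : R =>
    A.f (fun v => c (z0 + (j : ℤ) + (v : ℤ))) r = u j with hT
  have hpre : A.F c ⁻¹' {x : ℤ → Q | ∀ j : Fin n, x (z0 + (j : ℤ)) = u j}
      = ⋃ w ∈ Fintype.piFinset T, {s : ℤ → R | ∀ j : Fin n, s (z0 + (j : ℤ)) = w j} := by
    ext s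
    simp only [Set.mem_preimage, Set.mem_ofPred_eq, Set.mem_iUnion, Fintype.mem_piFinset, hT,
      Finset.mem_filter, Finset.mem_univ, true_and, exists_prop, CFCA.F]
    constructor
    · intro h
      exact ⟨fun j => s (z0 + (j : ℤ)), h, fun j => rfl⟩
    · rintro ⟨w, hw, hs⟩ j
      rw [hs j]
      exact hw j
  have hcyl : ∀ w : Fin n → R, ν {s : ℤ → R | ∀ j : Fin n, s (z0 + (j : ℤ)) = w j}
      = (Fintype.card R : ENNReal)⁻¹ ^ n := by
    intro w
    have hinj : Function.Injective fun j : Fin n => z0 + (j : ℤ) := by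
      intro a b h
      ext
      simpa using h
    have h := hν.2 (Finset.univ.image fun j : Fin n => z0 + (j : ℤ))
      (Function.extend (fun j : Fin n => z0 + (j : ℤ)) w fun _ => Classical.arbitrary R)
    rw [Finset.card_image_of_injective _ hinj, Finset.card_univ, Fintype.card_fin] at h
    rw [← h]
    congr 1
    ext s
    simp only [Set.mem_ofPred_eq, Finset.mem_image, Finset.mem_univ, true_and,
      forall_exists_index, forall_apply_eq_imp_iff]
    refine forall_congr' fun j => ?_
    have := hinj.extend_apply w (fun _ => Classical.arbitrary R) j
    rw [this]
  rw [hpre, measure_biUnion_finset]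
  · simp only [hcyl, Finset.sum_const, Fintype.card_piFinset, nsmul_eq_mul, div_eq_mul_inv,
      Finset.prod_mul_distrib, Finset.prod_const, Finset.card_univ, Fintype.card_fin,
      Nat.cast_prod, hT]
  · intro w _ w' _ hne
    refine Set.disjoint_left.2 fun s hs hs' => hne (funext fun j => ?_)
    exact (hs j).symm.trans (hs' j)
  · intro w _
    rw [Set.ofPred_forall]
    exact MeasurableSet.iInter fun j =>
      measurableSet_eq_fun (measurable_pi_apply (z0 + (j : ℤ))) measurable_const
end

section
/- There exists a one-dimensional stochastic cellular automaton with state set Q = {0,1} whose explicit global function F is simultaneously: not deterministic (there exist c, s, s' with F(c,s) ≠ F(c,s')), surjective (for every c ∈ Q^ℤ there exist c' and s with F(c',s) = c), and number-conserving (for every finite configuration c, S_F(c)({c' finite : Σ_z c'_z = Σ_z c_z}) = 1). -/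
open MeasureTheory

/-- Offset: swap cells `z, z+1` when `s z = 1` and `s (z+1) = 0`. -/
def swOff (a b d : Fin 2) : ℤ :=
  if b = 1 ∧ d = 0 then 1 else if a = 1 ∧ b = 0 then -1 else 0

lemma swOff_mem (a b d : Fin 2) : swOff a b d ∈ ({-1, 0, 1} : Finset ℤ) := by
  unfold swOff; split_ifs <;> simp

def swA : SCA (Fin 2) (Fin (1 + 1)) where
  V := {-1, 0, 1}
  V' := {-1, 0, 1}
  f := fun c s => c ⟨swOff (s ⟨-1, by simp⟩) (s ⟨0, by simp⟩) (s ⟨1, by simp⟩), swOff_mem _ _ _⟩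

def swP (s : ℤ → Fin 2) (z : ℤ) : ℤ := z + swOff (s (z + -1)) (s (z + 0)) (s (z + 1))

lemma swA_F (c : ℤ → Fin 2) (s : ℤ → Fin 2) : swA.F c s = fun z => c (swP s z) := rfl

lemma swP_inv (s : ℤ → Fin 2) : Function.Involutive (swP s) := by
  intro z
  by_cases h1 : s z = 1 ∧ s (z + 1) = 0
  · have e : swP s z = z + 1 := by simp [swP, swOff, h1]
    rw [e]
    simp [swP, swOff, h1]
  · by_cases h2 : s (z + -1) = 1 ∧ s z = 0
    · have e : swP s z = z + -1 := by simp [swP, swOff, h2]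
      rw [e]
      simp [swP, swOff, h2]
    · have e : swP s z = z := by
        simp only [swP, swOff, add_zero, if_neg h1, if_neg h2]
      rw [e, e]

lemma swA_meas (c : ℤ → Fin 2) : Measurable (swA.F c) := by
  rw [measurable_pi_iff]
  intro z
  have h : Measurable (fun r : swA.V' → Fin (1 + 1) => swA.f (fun v => c (z + (v : ℤ))) r) :=
    measurable_of_finite _
  exact h.comp (measurable_pi_lambda _ fun v => measurable_pi_apply _)



/-- There is an SCA with states `{0,1}` which is non-deterministic, surjective and
number-conserving (starting from any finite configuration, the total number of `1`s is
almost surely conserved). -/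
theorem stmt8 :
    ∃ (k : ℕ) (A : SCA (Fin 2) (Fin (k + 1))),
      (∃ (c : ℤ → Fin 2) (s s' : ℤ → Fin (k + 1)), A.F c s ≠ A.F c s') ∧
      (∀ c : ℤ → Fin 2, ∃ (c' : ℤ → Fin 2) (s : ℤ → Fin (k + 1)), A.F c' s = c) ∧
      (∀ ν : Measure (ℤ → Fin (k + 1)), IsUniformProduct ν →
        ∀ c : ℤ → Fin 2, (Function.support fun z => ((c z : ℕ))).Finite →
          ν.map (A.F c)
            {c' : ℤ → Fin 2 | (Function.support fun z => ((c' z : ℕ))).Finite ∧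
              ∑ᶠ z : ℤ, ((c' z : ℕ)) = ∑ᶠ z : ℤ, ((c z : ℕ))} = 1) := by
  refine ⟨1, swA, ⟨fun z => if z = 0 then 1 else 0, fun _ => 0, fun z => if z = 0 then 1 else 0, ?_⟩,
    ?_, ?_⟩
  · intro h
    have := congrFun h 0
    simp [swA_F, swP, swOff] at this
  · intro c
    refine ⟨c, fun _ => 0, ?_⟩
    funext z
    simp [swA_F, swP, swOff]
  · intro ν hν c hc
    haveI := hν.1
    haveI : IsProbabilityMeasure (ν.map (swA.F c)) :=
      Measure.isProbabilityMeasure_map (swA_meas c).aemeasurable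
    refine le_antisymm prob_le_one ?_
    refine le_trans ?_ (Measure.le_map_apply (swA_meas c).aemeasurable _)
    rw [← measure_univ (μ := ν)]
    refine measure_mono fun s _ => ?_
    let e : ℤ ≃ ℤ := (swP_inv s).toPerm
    refine ⟨?_, ?_⟩
    · exact hc.preimage e.injective.injOn
    · exact finsum_comp_equiv e (f := fun z => ((c z : ℕ)))
end

section
/- Let F be the explicit global function of a one-dimensional correlation-free stochastic cellular automaton (CFCA) with state set Q = {0,…,q}. If F is number-conserving (for every finite configuration c, S_F(c)({c' finite : Σ_z c'_z = Σ_z c_z}) = 1), then F is deterministic, i.e. F(c,s) = F(c,s') for all c ∈ Q^ℤ and all s, s' ∈ R^ℤ. -/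
open MeasureTheory

/-- A number-conserving correlation-free SCA (with states `{0,…,q}`) is deterministic. -/
theorem stmt9 {R : Type*}
    [Fintype R] [Nonempty R] [MeasurableSpace R] [MeasurableSingletonClass R]
    (q : ℕ) (A : CFCA (Fin (q + 1)) R)
    (ν : Measure (ℤ → R)) (hν : IsUniformProduct ν)
    (hcons : ∀ c : ℤ → Fin (q + 1), (Function.support fun z => ((c z : ℕ))).Finite →
      ν.map (A.F c)
        {c' : ℤ → Fin (q + 1) | (Function.support fun z => ((c' z : ℕ))).Finite ∧
          ∑ᶠ z : ℤ, ((c' z : ℕ)) = ∑ᶠ z : ℤ, ((c z : ℕ))} = 1) :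
    ∀ (c : ℤ → Fin (q + 1)) (s s' : ℤ → R), A.F c s = A.F c s' := by
  classical
  obtain ⟨hprob, hcyl⟩ := hν
  -- every cylinder contains a good random configuration
  have key : ∀ c : ℤ → Fin (q + 1), (Function.support fun z => ((c z : ℕ))).Finite →
      ∀ (t : Finset ℤ) (s : ℤ → R), ∃ s' : ℤ → R, (∀ i ∈ t, s' i = s i) ∧
        (Function.support fun z => ((A.F c s' z : ℕ))).Finite ∧
          ∑ᶠ z : ℤ, ((A.F c s' z : ℕ)) = ∑ᶠ z : ℤ, ((c z : ℕ)) := by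
    intro c hc t s
    have h1 := hcons c hc
    set S := {c' : ℤ → Fin (q + 1) | (Function.support fun z => ((c' z : ℕ))).Finite ∧
          ∑ᶠ z : ℤ, ((c' z : ℕ)) = ∑ᶠ z : ℤ, ((c z : ℕ))} with hS
    have hSc : S.Countable := by
      refine (Set.countable_range (fun g : ℤ →₀ Fin (q + 1) => (g : ℤ → Fin (q + 1)))).mono ?_
      rintro c' ⟨hf, -⟩
      have hf' : (Function.support c').Finite := by
        refine hf.subset ?_
        intro z hz h0
        exact hz (Fin.ext h0)
      exact ⟨Finsupp.ofSupportFinite c' hf', rfl⟩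
    have hSm : MeasurableSet S := hSc.measurableSet
    have hae : AEMeasurable (A.F c) ν := by
      by_contra h
      rw [Measure.map_of_not_aemeasurable h] at h1
      simp at h1
    rw [Measure.map_apply_of_aemeasurable hae hSm] at h1
    have hnull : ν (A.F c ⁻¹' S)ᶜ = 0 :=
      (prob_compl_eq_zero_iff₀ (hae.nullMeasurable hSm)).2 h1
    by_contra! hno
    have hsub : {s' : ℤ → R | ∀ i ∈ t, s' i = s i} ⊆ (A.F c ⁻¹' S)ᶜ := by
      intro s' hs' hmem
      exact hno s' hs' hmem.1 hmem.2
    have h0 := measure_mono_null hsub hnull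
    rw [hcyl t s] at h0
    simp at h0
  have hq : ∀ r : R, A.f (fun _ => 0) r = 0 := by
    intro r
    obtain ⟨s', hs', hfin, hsum⟩ := key (fun _ => 0) (by simp) {0} (fun _ => r)
    have hz : ∑ᶠ z : ℤ, ((A.F (fun _ => 0) s' z : ℕ)) = 0 := by rw [hsum]; simp
    rw [finsum_eq_sum_of_support_subset _ (s := hfin.toFinset) (by simp)] at hz
    rw [Finset.sum_eq_zero_iff] at hz
    have h00 : ((A.F (fun _ => 0) s' 0 : Fin (q + 1)) : ℕ) = 0 := by
      by_contra hne
      exact hne (hz 0 (by simpa using hne))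
    have : s' 0 = r := hs' 0 (by simp)
    rw [← this]
    exact Fin.ext h00
  intro c s s'
  funext z
  let U : Finset ℤ := A.V.image (fun v => z + v)
  let d : ℤ → Fin (q + 1) := fun w => if w ∈ U then c w else 0
  have hd : (Function.support fun w => ((d w : ℕ))).Finite := by
    refine U.finite_toSet.subset ?_
    intro w hw
    by_contra h
    apply hw
    have h' : w ∉ U := h
    simp [d, h']
  let W : Finset ℤ := insert z ((U ×ˢ A.V).image (fun p => p.1 - p.2))
  have hout : ∀ x : ℤ → R, ∀ w, w ∉ W → A.F d x w = 0 := by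
    intro x w hw
    have : (fun v : A.V => d (w + (v : ℤ))) = fun _ => 0 := by
      funext v
      have hn : w + (v : ℤ) ∉ U := by
        intro hU
        apply hw
        refine Finset.mem_insert_of_mem (Finset.mem_image.2 ⟨(w + v, v), ?_, by simp⟩)
        exact Finset.mem_product.2 ⟨hU, v.2⟩
      simp only [d, if_neg hn]
    unfold CFCA.F
    rw [this, hq]
  have hsumall : ∀ x : ℤ → R, ∑ w ∈ W, ((A.F d x w : ℕ)) = ∑ᶠ w : ℤ, ((d w : ℕ)) := by
    intro x
    obtain ⟨x', hx', -, hsum⟩ := key d hd W x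
    rw [← hsum, finsum_eq_sum_of_support_subset _ (s := W)]
    · refine Finset.sum_congr rfl fun w hw => ?_
      simp only [CFCA.F, hx' w hw]
    · intro w hw
      by_contra h
      apply hw
      have h' : w ∉ W := h
      simp [hout x' w h']
  have hzW : z ∈ W := Finset.mem_insert_self _ _
  have e1 := hsumall s
  have e2 := hsumall (Function.update s z (s' z))
  rw [← Finset.add_sum_erase _ _ hzW] at e1 e2
  have e3 : ∑ w ∈ W.erase z, ((A.F d (Function.update s z (s' z)) w : ℕ))
      = ∑ w ∈ W.erase z, ((A.F d s w : ℕ)) := by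
    refine Finset.sum_congr rfl fun w hw => ?_
    simp only [CFCA.F, Function.update_of_ne (Finset.ne_of_mem_erase hw)]
  rw [e3] at e2
  have e4 : ((A.F d s z : Fin (q + 1)) : ℕ) = (A.F d (Function.update s z (s' z)) z : ℕ) := by
    omega
  have e5 := Fin.ext e4
  have hdc : (fun v : A.V => d (z + (v : ℤ))) = fun v : A.V => c (z + (v : ℤ)) := by
    funext v
    have : z + (v : ℤ) ∈ U := Finset.mem_image_of_mem _ v.2
    simp only [d, if_pos this]
  simp only [CFCA.F, Function.update_self] at e5 ⊢
  rw [hdc] at e5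
  exact e5
end

section
/- Let F be the explicit global function of a one-dimensional correlation-free stochastic cellular automaton (CFCA) with state set Q = {0,…,q}. Suppose that for some t > 0 the t-step process is number-conserving (for every finite configuration c, the t-step measure S_F^t(c) gives probability 1 to the set of finite configurations c' with Σ_z c'_z = Σ_z c_z) and the t-step explicit map F^t is surjective (for every c ∈ Q^ℤ there exist c' ∈ Q^ℤ and s^1,…,s^t ∈ R^ℤ with F^t(c',s^1,…,s^t) = c). Then F is deterministic: F(c,s) = F(c,s') for all c, s, s'. -/
open MeasureTheory

theorem aux_loc {Q R : Type*} (A : CFCA Q R) : ∃ r : ℤ, 0 ≤ r ∧ ∀ (t : ℕ) (c c' : ℤ → Q)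
    (s s' : Fin t → (ℤ → R)) (z : ℤ), (∀ y, |y - z| ≤ t * r → c y = c' y) →
    (∀ i y, |y - z| ≤ t * r → s i y = s' i y) → A.iter t c s z = A.iter t c' s' z := by
  refine ⟨∑ v ∈ A.V, |v|, Finset.sum_nonneg fun _ _ => abs_nonneg _, ?_⟩
  set r := ∑ v ∈ A.V, |v| with hr
  have hr0 : 0 ≤ r := Finset.sum_nonneg fun _ _ => abs_nonneg _
  have hV : ∀ v ∈ A.V, |v| ≤ r := fun v hv =>
    Finset.single_le_sum (f := fun v : ℤ => |v|) (fun _ _ => abs_nonneg _) hv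
  intro t
  induction t with
  | zero =>
    intro c c' s s' z hc _
    exact hc z (by simp)
  | succ t ih =>
    intro c c' s s' z hc hs
    simp only [CFCA.iter, CFCA.F]
    have h0 : s (Fin.last t) z = s' (Fin.last t) z := hs _ _ (by
      simp only [sub_self, abs_zero]; positivity)
    rw [h0]
    congr 1
    funext v
    have hv := hV v v.2
    have key : ∀ y, |y - (z + (v : ℤ))| ≤ t * r → |y - z| ≤ ((t + 1 : ℕ) : ℤ) * r := by
      intro y hy
      have h1 : y - z = (y - (z + (v : ℤ))) + v := by ring
      rw [h1]
      have := abs_add_le (y - (z + (v : ℤ))) (v : ℤ)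
      push_cast
      linarith
    apply ih
    · intro y hy
      exact hc y (key y hy)
    · intro i y hy
      exact hs _ y (key y hy)

theorem aux_good {R : Type*}
    [Fintype R] [Nonempty R] [MeasurableSpace R] [MeasurableSingletonClass R]
    (q : ℕ) (ν : Measure (ℤ → R)) (hν : IsUniformProduct ν) (t : ℕ)
    (f : (Fin t → (ℤ → R)) → (ℤ → Fin (q + 1))) (P : (ℤ → Fin (q + 1)) → Prop)
    (hP : ∀ c, P c → (Function.support fun z => ((c z : ℕ))).Finite)
    (h : (Measure.pi fun _ : Fin t => ν).map f {c' | P c'} = 1)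
    (N : Finset ℤ) (s : Fin t → (ℤ → R)) :
    ∃ s' : Fin t → (ℤ → R), (∀ i, ∀ z ∈ N, s i z = s' i z) ∧ P (f s') := by
  have := hν.1
  have hf : AEMeasurable f (Measure.pi fun _ : Fin t => ν) := by
    by_contra hf
    rw [Measure.map_of_not_aemeasurable hf] at h
    simp at h
  have hS : MeasurableSet {c' | P c'} := by
    apply Set.Countable.measurableSet
    refine (Set.countable_range (fun g : ℤ →₀ Fin (q + 1) => (g : ℤ → Fin (q + 1)))).mono ?_
    intro c hc
    have h1 := hP c hc
    have h2 : (Function.support c).Finite := by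
      refine h1.subset ?_
      intro z hz
      simp only [Function.mem_support] at hz ⊢
      intro h0
      exact hz (Fin.ext (by simpa using h0))
    exact ⟨Finsupp.ofSupportFinite c h2, rfl⟩
  rw [Measure.map_apply_of_aemeasurable hf hS] at h
  by_contra! hcon
  let C : Set (Fin t → (ℤ → R)) := Set.pi Set.univ fun i => {σ | ∀ z ∈ N, σ z = s i z}
  have hCm : MeasurableSet C := by
    refine MeasurableSet.univ_pi fun i => ?_
    have : {σ : ℤ → R | ∀ z ∈ N, σ z = s i z} = ⋂ z ∈ N, (fun σ : ℤ → R => σ z) ⁻¹' {s i z} := by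
      ext σ; simp
    rw [this]
    exact Finset.measurableSet_biInter _ fun z _ =>
      measurable_pi_apply z (measurableSet_singleton _)
  have hCpos : (Measure.pi fun _ : Fin t => ν) C ≠ 0 := by
    rw [Measure.pi_pi]
    refine Finset.prod_ne_zero_iff.2 fun i _ => ?_
    rw [hν.2 N (s i)]
    exact pow_ne_zero _ (ENNReal.inv_ne_zero.2 (ENNReal.natCast_ne_top _))
  have hd : Disjoint (f ⁻¹' {c' | P c'}) C := by
    rw [Set.disjoint_left]
    intro σ h1 h2
    exact hcon σ (fun i z hz => ((h2 i (Set.mem_univ i)) z hz).symm) h1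
  have hu := measure_union (μ := Measure.pi fun _ : Fin t => ν) hd hCm
  have hle := prob_le_one (μ := Measure.pi fun _ : Fin t => ν) (s := f ⁻¹' {c' | P c'} ∪ C)
  rw [hu, h] at hle
  exact absurd hle (not_le.2 (ENNReal.lt_add_right ENNReal.one_ne_top hCpos))

theorem aux_all {R : Type*}
    [Fintype R] [Nonempty R] [MeasurableSpace R] [MeasurableSingletonClass R]
    (q : ℕ) (A : CFCA (Fin (q + 1)) R)
    (ν : Measure (ℤ → R)) (hν : IsUniformProduct ν)
    (t : ℕ)
    (hcons : ∀ c : ℤ → Fin (q + 1), (Function.support fun z => ((c z : ℕ))).Finite →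
      (Measure.pi fun _ : Fin t => ν).map (A.iter t c)
        {c' : ℤ → Fin (q + 1) | (Function.support fun z => ((c' z : ℕ))).Finite ∧
          ∑ᶠ z : ℤ, ((c' z : ℕ)) = ∑ᶠ z : ℤ, ((c z : ℕ))} = 1)
    (c : ℤ → Fin (q + 1)) (hc : (Function.support fun z => ((c z : ℕ))).Finite)
    (s : Fin t → (ℤ → R)) :
    (Function.support fun z => ((A.iter t c s z : ℕ))).Finite ∧
          ∑ᶠ z : ℤ, ((A.iter t c s z : ℕ)) = ∑ᶠ z : ℤ, ((c z : ℕ)) := by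
  obtain ⟨r, hr, hloc⟩ := aux_loc A
  have htr : 0 ≤ (t : ℤ) * r := by positivity
  have good := fun c hc => aux_good q ν hν t (A.iter t c) _ (fun _ h => h.1) (hcons c hc)
  have zero : ∀ s z, A.iter t (fun _ => 0) s z = 0 := by
    intro s z
    obtain ⟨s', h1, h2, h3⟩ := good (fun _ => 0) (by simp) (Finset.Icc (z - t * r) (z + t * r)) s
    rw [hloc t _ (fun _ => 0) s s' z (fun _ _ => rfl) (fun i y hy => h1 i y (by
      rw [abs_le] at hy; rw [Finset.mem_Icc]; constructor <;> linarith))]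
    have h4 : ∑ᶠ z : ℤ, ((A.iter t (fun _ => 0) s' z : ℕ)) = 0 := by rw [h3]; simp
    have h5 := single_le_finsum z h2 (fun _ => Nat.zero_le _)
    rw [h4] at h5
    exact Fin.ext (by simpa using h5)
  obtain ⟨B, hB⟩ : ∃ B : ℤ, ∀ y, c y ≠ 0 → |y| ≤ B := by
    obtain ⟨B, hB⟩ := (hc.image (fun y => |y|)).bddAbove
    refine ⟨B, fun y hy => hB ⟨y, ?_, rfl⟩⟩
    simp only [Function.mem_support]
    intro h0
    exact hy (Fin.ext (by simpa using h0))
  have out : ∀ s z, B + t * r < |z| → A.iter t c s z = 0 := by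
    intro s z hz
    rw [← zero s z]
    refine hloc t _ _ _ _ z (fun y hy => ?_) (fun _ _ _ => rfl)
    by_contra hy0
    have h1 := hB y hy0
    have h2 := abs_sub_abs_le_abs_sub z y
    rw [abs_sub_comm] at h2
    linarith
  obtain ⟨s', h1, h2⟩ := good c hc (Finset.Icc (-(B + 2 * (t * r))) (B + 2 * (t * r))) s
  have heq : A.iter t c s = A.iter t c s' := by
    funext z
    by_cases hz : B + t * r < |z|
    · rw [out s z hz, out s' z hz]
    · refine hloc t _ _ _ _ z (fun _ _ => rfl) (fun i y hy => h1 i y ?_)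
      rw [not_lt, abs_le] at hz
      rw [abs_le] at hy
      rw [Finset.mem_Icc]
      constructor <;> linarith [hz.1, hz.2, hy.1, hy.2]
  rw [heq]
  exact h2

/-- If, for some `t > 0`, the `t`-step process of a correlation-free SCA (with states
`{0,…,q}`) is number-conserving and the `t`-step explicit map is surjective, then the
CFCA is deterministic. -/
theorem stmt10 {R : Type*}
    [Fintype R] [Nonempty R] [MeasurableSpace R] [MeasurableSingletonClass R]
    (q : ℕ) (A : CFCA (Fin (q + 1)) R)
    (ν : Measure (ℤ → R)) (hν : IsUniformProduct ν)
    (t : ℕ) (ht : 0 < t)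
    (hcons : ∀ c : ℤ → Fin (q + 1), (Function.support fun z => ((c z : ℕ))).Finite →
      (Measure.pi fun _ : Fin t => ν).map (A.iter t c)
        {c' : ℤ → Fin (q + 1) | (Function.support fun z => ((c' z : ℕ))).Finite ∧
          ∑ᶠ z : ℤ, ((c' z : ℕ)) = ∑ᶠ z : ℤ, ((c z : ℕ))} = 1)
    (hsurj : ∀ c : ℤ → Fin (q + 1),
      ∃ (c' : ℤ → Fin (q + 1)) (s : Fin t → (ℤ → R)), A.iter t c' s = c) :
    ∀ (c : ℤ → Fin (q + 1)) (s s' : ℤ → R), A.F c s = A.F c s' := by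
  have surjF : ∀ c, ∃ c' s, A.F c' s = c := by
    obtain ⟨k, rfl⟩ : ∃ k, t = k + 1 := ⟨t - 1, by omega⟩
    intro c
    obtain ⟨c', s, h⟩ := hsurj c
    exact ⟨_, _, h⟩
  have surjk : ∀ (k : ℕ) (c : ℤ → Fin (q + 1)), ∃ (c' : ℤ → Fin (q + 1)) (s : Fin k → (ℤ → R)),
      A.iter k c' s = c := by
    intro k
    induction k with
    | zero => exact fun c => ⟨c, fun i => i.elim0, rfl⟩
    | succ k ih =>
      intro c
      obtain ⟨e, σ, h⟩ := surjF c
      obtain ⟨c', s, h'⟩ := ih e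
      refine ⟨c', Fin.snoc (α := fun _ => ℤ → R) s σ, ?_⟩
      simp [CFCA.iter, h', h]
  have all := aux_all q A ν hν t hcons
  obtain ⟨r, hr, hloc⟩ := aux_loc A
  obtain ⟨k, rfl⟩ : ∃ k, t = k + 1 := ⟨t - 1, by omega⟩
  intro c s s'
  funext z
  obtain ⟨c', σ, hc'⟩ := surjk k c
  set M : ℤ := ∑ v ∈ A.V, |v| with hM
  have hV : ∀ v ∈ A.V, |v| ≤ M := fun v hv =>
    Finset.single_le_sum (f := fun v : ℤ => |v|) (fun _ _ => abs_nonneg _) hv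
  let d : ℤ → Fin (q + 1) := fun y => if |y - z| ≤ M + k * r then c' y else 0
  have hd : (Function.support fun y => ((d y : ℕ))).Finite := by
    refine (Set.finite_Icc (z - (M + k * r)) (z + (M + k * r))).subset ?_
    intro y hy
    by_contra hn
    apply hy
    have : ¬ |y - z| ≤ M + k * r := by
      intro h
      rw [abs_le] at h
      exact hn ⟨by linarith [h.1], by linarith [h.2]⟩
    simp [d, this]
  have he : ∀ v : A.V, A.iter k d σ (z + v) = c (z + v) := by
    intro v
    rw [← hc']
    refine hloc k _ _ _ _ _ (fun y hy => ?_) (fun _ _ _ => rfl)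
    have hv := hV v v.2
    have h1 : y - z = (y - (z + (v : ℤ))) + v := by ring
    have h2 := abs_add_le (y - (z + (v : ℤ))) (v : ℤ)
    rw [← h1] at h2
    have : |y - z| ≤ M + k * r := by linarith
    simp [d, this]
  have main : ∀ τ : ℤ → R, (Function.support fun y => ((A.F (A.iter k d σ) τ y : ℕ))).Finite ∧
      ∑ᶠ y : ℤ, ((A.F (A.iter k d σ) τ y : ℕ)) = ∑ᶠ y : ℤ, ((d y : ℕ)) := by
    intro τ
    have := all d hd (Fin.snoc (α := fun _ => ℤ → R) σ τ)
    simpa [CFCA.iter] using this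
  have hz : ∀ τ, A.F (A.iter k d σ) τ z = A.F c τ z := by
    intro τ
    simp only [CFCA.F, he]
  rw [← hz s, ← hz s']
  have h1 := main s
  have h2 := main (Function.update s z (s' z))
  have hzz : A.F (A.iter k d σ) s' z = A.F (A.iter k d σ) (Function.update s z (s' z)) z := by
    simp [CFCA.F]
  rw [hzz]
  have hne : ∀ y, y ≠ z → A.F (A.iter k d σ) (Function.update s z (s' z)) y
      = A.F (A.iter k d σ) s y := by
    intro y hy
    simp [CFCA.F, hy]
  generalize A.F (A.iter k d σ) (Function.update s z (s' z)) = b at *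
  generalize A.F (A.iter k d σ) s = a at *
  have hs := h1.2.trans h2.2.symm
  let T := insert z (h1.1.toFinset ∪ h2.1.toFinset)
  rw [finsum_eq_sum_of_support_subset (s := T) _ (by intro y hy; simp [T]; right; left; simpa using hy),
    finsum_eq_sum_of_support_subset (s := T) _ (by intro y hy; simp [T]; right; right; simpa using hy),
    ← Finset.add_sum_erase T _ (Finset.mem_insert_self _ _),
    ← Finset.add_sum_erase T _ (Finset.mem_insert_self _ _)] at hs
  refine Fin.ext ?_
  have hs2 : ∑ y ∈ T.erase z, (b y : ℕ) = ∑ y ∈ T.erase z, (a y : ℕ) :=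
    Finset.sum_congr rfl (fun y hy => by rw [hne y (Finset.ne_of_mem_erase hy)])
  omega
end

section
/- There exists a one-dimensional correlation-free stochastic cellular automaton with state set Q = {0,1} whose explicit global function F is not deterministic (there exist c, s, s' with F(c,s) ≠ F(c,s')) but whose two-step process is number-conserving: for every finite configuration c, the pushforward of ν_R ⊗ ν_R under (s,s') ↦ F(F(c,s),s') gives probability 1 to the set of finite configurations c' with Σ_z c'_z = Σ_z c_z. -/
open MeasureTheory

def gd (c : ℤ → Fin 2) (z : ℤ) : Prop :=
  c (z-3) = 0 ∧ c (z-2) = 0 ∧ c (z-1) = 0 ∧ c z = 1 ∧ c (z+4) = 0 ∧ c (z+5) = 0 ∧ c (z+6) = 0 ∧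
    ((c (z+1) : Fin 2) : ℕ) + (c (z+2) : Fin 2) + (c (z+3) : Fin 2) ≤ 1

open Classical in
noncomputable def stp (c : ℤ → Fin 2) (w : ℤ) (r : Fin 2) : Fin 2 :=
  if gd c (w-1) then (if c w = 0 ∧ c (w+1) = 0 ∧ c (w+2) = 0 then 1 else 0)
  else if gd c (w-2) then (if c w = 1 then 1 else if c (w+1) = 1 then r else 0)
  else if gd c (w-3) then 0 else c w

noncomputable def myA : CFCA (Fin 2) (Fin (1+1)) where
  V := Finset.Icc (-20) 20
  f := fun g r => stp (fun x => if h : x ∈ Finset.Icc (-20 : ℤ) 20 then g ⟨x, h⟩ else 0) 0 r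

lemma gd_congr {c d : ℤ → Fin 2} {z y : ℤ} (h : ∀ i, -3 ≤ i → i ≤ 6 → c (z+i) = d (y+i)) :
    gd c z ↔ gd d y := by
  have a1 := h (-3) (by norm_num) (by norm_num)
  have a2 := h (-2) (by norm_num) (by norm_num)
  have a3 := h (-1) (by norm_num) (by norm_num)
  have a4 := h 0 (by norm_num) (by norm_num)
  have a5 := h 1 (by norm_num) (by norm_num)
  have a6 := h 2 (by norm_num) (by norm_num)
  have a7 := h 3 (by norm_num) (by norm_num)
  have a8 := h 4 (by norm_num) (by norm_num)
  have a9 := h 5 (by norm_num) (by norm_num)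
  have a10 := h 6 (by norm_num) (by norm_num)
  simp only [add_zero, ← sub_eq_add_neg] at *
  unfold gd
  rw [a1, a2, a3, a4, a5, a6, a7, a8, a9, a10]

lemma stp_congr {c d : ℤ → Fin 2} {z y : ℤ} (r : Fin 2)
    (h : ∀ i, -10 ≤ i → i ≤ 10 → c (z+i) = d (y+i)) : stp c z r = stp d y r := by
  have g : ∀ j, 1 ≤ j → j ≤ 3 → (gd c (z-j) ↔ gd d (y-j)) := by
    intro j h1 h2
    apply gd_congr
    intro i h3 h4
    have := h (i-j) (by omega) (by omega)
    rw [show z - j + i = z + (i-j) by ring, this]; congr 1; ring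
  have a4 := h 0 (by norm_num) (by norm_num)
  have a5 := h 1 (by norm_num) (by norm_num)
  have a6 := h 2 (by norm_num) (by norm_num)
  simp only [add_zero] at *
  unfold stp
  have g1 := g 1 (by norm_num) (by norm_num)
  have g2 := g 2 (by norm_num) (by norm_num)
  have g3 := g 3 (by norm_num) (by norm_num)
  rw [a4, a5, a6]
  by_cases h1 : gd d (y-1)
  · rw [if_pos h1, if_pos (g1.2 h1)]
  rw [if_neg h1, if_neg (fun k => h1 (g1.1 k))]
  by_cases h2 : gd d (y-2)
  · rw [if_pos h2, if_pos (g2.2 h2)]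
  rw [if_neg h2, if_neg (fun k => h2 (g2.1 k))]
  by_cases h3 : gd d (y-3)
  · rw [if_pos h3, if_pos (g3.2 h3)]
  rw [if_neg h3, if_neg (fun k => h3 (g3.1 k))]

lemma myA_F (c : ℤ → Fin 2) (s : ℤ → Fin 2) (w : ℤ) : myA.F c s w = stp c w (s w) := by
  unfold CFCA.F
  simp only [myA]
  apply stp_congr
  intro i h1 h2
  have : i ∈ Finset.Icc (-20 : ℤ) 20 := by rw [Finset.mem_Icc]; omega
  rw [zero_add, dif_pos this]

lemma gd_sep {c : ℤ → Fin 2} {z y : ℤ} (hz : gd c z) (hy : gd c y) (h : z < y) : z + 7 ≤ y := by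
  by_contra hc
  obtain ⟨z1, z2, z3, z4, z5, z6, z7, z8⟩ := hz
  obtain ⟨y1, y2, y3, y4, y5, y6, y7, y8⟩ := hy
  have : y = z+1 ∨ y = z+2 ∨ y = z+3 ∨ y = z+4 ∨ y = z+5 ∨ y = z+6 := by omega
  rcases this with rfl | rfl | rfl | rfl | rfl | rfl
  · simp [z4] at y3
  · simp [z4] at y2
  · simp [z4] at y1
  · simp [z5] at y4
  · simp [z6] at y4
  · simp [z7] at y4

lemma gd_no {c : ℤ → Fin 2} {z : ℤ} (hz : gd c z) (y : ℤ) (h : y ≠ z) (h1 : z - 7 < y)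
    (h2 : y < z + 7) : ¬ gd c y := by
  intro hy
  rcases lt_or_gt_of_ne h with h | h
  · have := gd_sep hy hz h; omega
  · have := gd_sep hz hy h; omega

lemma stp_one {c : ℤ → Fin 2} {z : ℤ} (hz : gd c z) (r : Fin 2) :
    stp c (z+1) r = if c (z+1) = 0 ∧ c (z+2) = 0 ∧ c (z+3) = 0 then 1 else 0 := by
  unfold stp
  rw [add_sub_cancel_right, if_pos hz, add_assoc, add_assoc]; norm_num

lemma stp_two {c : ℤ → Fin 2} {z : ℤ} (hz : gd c z) (r : Fin 2) :
    stp c (z+2) r = if c (z+2) = 1 then 1 else if c (z+3) = 1 then r else 0 := by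
  unfold stp
  rw [add_sub_cancel_right, if_neg (gd_no hz _ (by omega) (by omega) (by omega)), if_pos hz,
    add_assoc]; norm_num

lemma stp_three {c : ℤ → Fin 2} {z : ℤ} (hz : gd c z) (r : Fin 2) :
    stp c (z+3) r = 0 := by
  unfold stp
  rw [add_sub_cancel_right, if_neg (gd_no hz _ (by omega) (by omega) (by omega)),
    if_neg (gd_no hz _ (by omega) (by omega) (by omega)), if_pos hz]

lemma stp_else {c : ℤ → Fin 2} {w : ℤ} (r : Fin 2) (h1 : ¬ gd c (w-1)) (h2 : ¬ gd c (w-2))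
    (h3 : ¬ gd c (w-3)) : stp c w r = c w := by
  unfold stp
  rw [if_neg h1, if_neg h2, if_neg h3]

lemma fin2 (a : Fin 2) : a = 0 ∨ a = 1 := by omega

lemma blk {c d : ℤ → Fin 2} {s : ℤ → Fin 2} (hd : ∀ w, d w = stp c w (s w)) {z : ℤ}
    (hz : gd c z) :
    ((d (z+1) : Fin 2) : ℕ) + (d (z+2) : Fin 2) + (d (z+3) : Fin 2) ≤ 1 := by
  rw [hd, hd, hd, stp_one hz, stp_two hz, stp_three hz]
  have h8 := hz.2.2.2.2.2.2.2
  generalize s (z+2) = r at *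
  generalize c (z+1) = x1 at *
  generalize c (z+2) = x2 at *
  generalize c (z+3) = x3 at *
  revert r x1 x2 x3
  decide

lemma gd_fwd {c d : ℤ → Fin 2} {s : ℤ → Fin 2} (hd : ∀ w, d w = stp c w (s w)) {z : ℤ}
    (hz : gd c z) : gd d z := by
  have key : ∀ i, -3 ≤ i → i ≤ 6 → (i ≤ 0 ∨ 4 ≤ i) → d (z+i) = c (z+i) := by
    intro i h1 h2 h3
    rw [hd]
    have : ∀ j, 1 ≤ j → j ≤ 3 → ¬ gd c (z+i-j) := by
      intro j h4 h5
      exact gd_no hz _ (by omega) (by omega) (by omega)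
    exact stp_else _ (this 1 (by omega) (by omega)) (this 2 (by omega) (by omega))
      (this 3 (by omega) (by omega))
  have hb := blk hd hz
  obtain ⟨z1, z2, z3, z4, z5, z6, z7, z8⟩ := hz
  have a1 := key (-3) (by norm_num) (by norm_num) (by norm_num)
  have a2 := key (-2) (by norm_num) (by norm_num) (by norm_num)
  have a3 := key (-1) (by norm_num) (by norm_num) (by norm_num)
  have a4 := key 0 (by norm_num) (by norm_num) (by norm_num)
  have a8 := key 4 (by norm_num) (by norm_num) (by norm_num)
  have a9 := key 5 (by norm_num) (by norm_num) (by norm_num)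
  have a10 := key 6 (by norm_num) (by norm_num) (by norm_num)
  simp only [add_zero, ← sub_eq_add_neg] at *
  exact ⟨a1.trans z1, a2.trans z2, a3.trans z3, a4.trans z4, a8.trans z5, a9.trans z6,
    a10.trans z7, hb⟩

lemma gd_bwd {c d : ℤ → Fin 2} {s : ℤ → Fin 2} (hd : ∀ w, d w = stp c w (s w)) {z : ℤ}
    (hz : gd d z) : gd c z := by
  by_contra hc
  apply hc
  refine (gd_congr (c := d) (d := c) ?_).1 hz
  intro i h1 h2
  rw [hd]
  have : ∀ j, 1 ≤ j → j ≤ 3 → ¬ gd c (z+i-j) := by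
    intro j h4 h5 h6
    by_cases he : z + i - j = z
    · rw [he] at h6; exact hc h6
    · exact gd_no hz _ he (by omega) (by omega) (gd_fwd hd h6)
  exact stp_else _ (this 1 (by omega) (by omega)) (this 2 (by omega) (by omega))
      (this 3 (by omega) (by omega))

lemma two_blk {c d e : ℤ → Fin 2} {s t : ℤ → Fin 2} (hd : ∀ w, d w = stp c w (s w))
    (he : ∀ w, e w = stp d w (t w)) {z : ℤ} (hz : gd c z) :
    ((e (z+1) : Fin 2) : ℕ) + (e (z+2) : Fin 2) + (e (z+3) : Fin 2) =
    ((c (z+1) : Fin 2) : ℕ) + (c (z+2) : Fin 2) + (c (z+3) : Fin 2) := by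
  have hz' := gd_fwd hd hz
  rw [he, he, he, stp_one hz', stp_two hz', stp_three hz',
    hd, hd, hd, stp_one hz, stp_two hz, stp_three hz]
  have h8 := hz.2.2.2.2.2.2.2
  generalize s (z+2) = r at *
  generalize t (z+2) = r' at *
  generalize c (z+1) = x1 at *
  generalize c (z+2) = x2 at *
  generalize c (z+3) = x3 at *
  revert r r' x1 x2 x3
  decide

lemma two_else {c d e : ℤ → Fin 2} {s t : ℤ → Fin 2} (hd : ∀ w, d w = stp c w (s w))
    (he : ∀ w, e w = stp d w (t w)) {w : ℤ} (h1 : ¬ gd c (w-1)) (h2 : ¬ gd c (w-2))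
    (h3 : ¬ gd c (w-3)) : e w = c w := by
  rw [he, stp_else _ (fun h => h1 (gd_bwd hd h)) (fun h => h2 (gd_bwd hd h))
    (fun h => h3 (gd_bwd hd h)), hd, stp_else _ h1 h2 h3]

open Classical in
lemma two_main {c d e : ℤ → Fin 2} {s t : ℤ → Fin 2} (hd : ∀ w, d w = stp c w (s w))
    (he : ∀ w, e w = stp d w (t w)) (hc : (Function.support fun z => ((c z : ℕ))).Finite) :
    (Function.support fun z => ((e z : ℕ))).Finite ∧
      ∑ᶠ z : ℤ, ((e z : ℕ)) = ∑ᶠ z : ℤ, ((c z : ℕ)) := by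
  have gsup : ∀ z, gd c z → z ∈ (Function.support fun z => ((c z : ℕ))) := by
    intro z hz
    simp [hz.2.2.2.1]
  have hG : {z | gd c z}.Finite := hc.subset gsup
  have tr : ∀ j : ℤ, {w | gd c (w - j)}.Finite := by
    intro j
    exact hG.preimage (f := fun w => w - j) (by intro a _ b _ h; simpa using h)
  have hE : (Function.support fun z => ((e z : ℕ))).Finite := by
    refine (((hc.union (tr 1)).union (tr 2)).union (tr 3)).subset ?_
    intro w hw
    by_cases h1 : gd c (w-1)
    · exact Or.inl (Or.inl (Or.inr h1))
    by_cases h2 : gd c (w-2)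
    · exact Or.inl (Or.inr h2)
    by_cases h3 : gd c (w-3)
    · exact Or.inr h3
    rw [Function.mem_support, two_else hd he h1 h2 h3] at hw
    exact Or.inl (Or.inl (Or.inl hw))
  refine ⟨hE, ?_⟩
  -- split function
  have split : ∀ (a : ℤ → Fin 2), (Function.support fun z => ((a z : ℕ))).Finite →
      ∑ᶠ z : ℤ, ((a z : ℕ)) =
      ∑ᶠ w : ℤ, (if gd c (w-1) ∨ gd c (w-2) ∨ gd c (w-3) then 0 else (a w : ℕ)) +
      ∑ᶠ z : ℤ, (if gd c z then (a (z+1) : ℕ) + (a (z+2) : ℕ) + (a (z+3) : ℕ) else 0) := by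
    intro a ha
    have sh : ∀ j : ℤ, ∑ᶠ z : ℤ, (if gd c z then (a (z+j) : ℕ) else 0) =
        ∑ᶠ w : ℤ, (if gd c (w-j) then (a w : ℕ) else 0) := by
      intro j
      rw [← finsum_comp_equiv (Equiv.addRight j)
        (f := fun w : ℤ => (if gd c (w-j) then (a w : ℕ) else 0))]
      simp
    have f0 : (Function.support fun w : ℤ =>
        (if gd c (w-1) ∨ gd c (w-2) ∨ gd c (w-3) then 0 else (a w : ℕ))).Finite := by
      refine ha.subset ?_
      intro w hw hw'
      apply hw
      simp only at hw'
      simp [hw']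
    have fj : ∀ j : ℤ, (Function.support fun w : ℤ =>
        (if gd c (w-j) then (a w : ℕ) else 0)).Finite := by
      intro j
      refine ha.subset ?_
      intro w hw hw'
      apply hw
      simp only at hw'
      simp [hw']
    have gj : ∀ j : ℤ, (Function.support fun w : ℤ =>
        (if gd c w then (a (w+j) : ℕ) else 0)).Finite := by
      intro j
      refine hG.subset ?_
      intro w hw
      by_contra h
      apply hw
      simp only [Set.mem_ofPred_eq] at h
      simp [h]
    have e1 : ∑ᶠ z : ℤ, (if gd c z then (a (z+1) : ℕ) + (a (z+2) : ℕ) + (a (z+3) : ℕ) else 0) =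
        ∑ᶠ w : ℤ, (if gd c (w-1) then (a w : ℕ) else 0) +
        ∑ᶠ w : ℤ, (if gd c (w-2) then (a w : ℕ) else 0) +
        ∑ᶠ w : ℤ, (if gd c (w-3) then (a w : ℕ) else 0) := by
      rw [← sh, ← sh, ← sh, ← finsum_add_distrib (gj 1) (gj 2), ← finsum_add_distrib _ (gj 3)]
      · congr 1; ext z; split_ifs <;> simp
      · exact ((gj 1).union (gj 2)).subset (Function.support_add _ _)
    rw [e1, ← finsum_add_distrib (fj 1) (fj 2), ← finsum_add_distrib _ (fj 3),
      ← finsum_add_distrib f0]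
    · congr 1; ext w
      by_cases h1 : gd c (w-1)
      · have h2 := gd_no h1 (w-2) (by omega) (by omega) (by omega)
        have h3 := gd_no h1 (w-3) (by omega) (by omega) (by omega)
        simp [h1, h2, h3]
      by_cases h2 : gd c (w-2)
      · have h3 := gd_no h2 (w-3) (by omega) (by omega) (by omega)
        simp [h1, h2, h3]
      by_cases h3 : gd c (w-3) <;> simp [h1, h2, h3]
    · exact ((((fj 1).union (fj 2)).subset (Function.support_add _ _)).union (fj 3)).subset
        (Function.support_add _ _)
    · exact ((fj 1).union (fj 2)).subset (Function.support_add _ _)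
  rw [split e hE, split c hc]
  congr 2
  · ext w
    by_cases h : gd c (w-1) ∨ gd c (w-2) ∨ gd c (w-3)
    · simp [h]
    · rw [if_neg h, if_neg h]
      push Not at h
      rw [two_else hd he h.1 h.2.1 h.2.2]
  · ext z
    by_cases h : gd c z
    · rw [if_pos h, if_pos h, two_blk hd he h]
    · simp [h]

lemma myA_meas (c : ℤ → Fin 2) : Measurable
    (fun p : (ℤ → Fin 2) × (ℤ → Fin 2) => myA.F (myA.F c p.1) p.2) := by
  rw [measurable_pi_iff]
  intro z
  have h1 : Measurable (fun q : (myA.V → Fin 2) × Fin 2 => myA.f q.1 q.2) :=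
    Measurable.of_discrete
  refine h1.comp (Measurable.prodMk ?_ ((measurable_pi_apply z).comp measurable_snd))
  rw [measurable_pi_iff]
  intro v
  have h2 : Measurable (fun r : Fin 2 => myA.f (fun u => c (z + v + (u:ℤ))) r) :=
    Measurable.of_discrete
  exact h2.comp ((measurable_pi_apply (z + (v:ℤ))).comp measurable_fst)

/-- There is a non-deterministic correlation-free SCA with states `{0,1}` whose two-step
process is number-conserving. -/
theorem stmt11 :
    ∃ (k : ℕ) (A : CFCA (Fin 2) (Fin (k + 1))),
      (∃ (c : ℤ → Fin 2) (s s' : ℤ → Fin (k + 1)), A.F c s ≠ A.F c s') ∧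
      (∀ ν : Measure (ℤ → Fin (k + 1)), IsUniformProduct ν →
        ∀ c : ℤ → Fin 2, (Function.support fun z => ((c z : ℕ))).Finite →
          (ν.prod ν).map
              (fun p : (ℤ → Fin (k + 1)) × (ℤ → Fin (k + 1)) => A.F (A.F c p.1) p.2)
            {c' : ℤ → Fin 2 | (Function.support fun z => ((c' z : ℕ))).Finite ∧
              ∑ᶠ z : ℤ, ((c' z : ℕ)) = ∑ᶠ z : ℤ, ((c z : ℕ))} = 1) := by
  refine ⟨1, myA, ?_, ?_⟩
  · refine ⟨fun z => if z = 0 ∨ z = 3 then 1 else 0, fun _ => 0, fun _ => 1, ?_⟩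
    intro h
    have h2 := congrFun h (0+2)
    have hg : gd (fun z => if z = 0 ∨ z = 3 then 1 else 0) 0 := by
      unfold gd; simp
    rw [myA_F, myA_F, stp_two hg, stp_two hg] at h2
    simp at h2
  · intro ν hν c hc
    have := hν.1
    have hm := myA_meas c
    have : IsProbabilityMeasure ((ν.prod ν).map
      (fun p : (ℤ → Fin (1 + 1)) × (ℤ → Fin (1 + 1)) => myA.F (myA.F c p.1) p.2)) :=
      Measure.isProbabilityMeasure_map hm.aemeasurable
    refine le_antisymm prob_le_one ?_
    refine le_trans ?_ (Measure.le_map_apply hm.aemeasurable _)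
    rw [← measure_univ (μ := ν.prod ν)]
    apply measure_mono
    intro p _
    exact two_main (myA_F c p.1) (myA_F _ p.2) hc
end

section
/- Let Q be a finite set and Φ : Q^ℤ → Q^ℤ a deterministic one-dimensional cellular automaton given by a local rule. Let G be the correlation-free stochastic cellular automaton with state set Q × Q and random symbols R = Q whose explicit global function satisfies G((c,c'),s)_z = (Φ(c')_z, s_z) for all z (identifying a configuration of (Q×Q)^ℤ with a pair (c,c') of configurations in Q^ℤ). Then: (1) the two-step stochastic global function of G is white noise for every initial configuration — i.e. for every x ∈ (Q×Q)^ℤ, the pushforward of ν_Q ⊗ ν_Q under (s,s') ↦ G(G(x,s),s') equals the uniform product measure on (Q×Q)^ℤ — if and only if Φ is surjective; and (2) G² is noisy (for all x, y ∈ (Q×Q)^ℤ there exist s, s' with G(G(x,s),s') = y) if and only if Φ is surjective. -/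
open MeasureTheory

theorem growth (B A : ℕ) (h : ∀ m : ℕ, B ^ m ≤ A ^ (m+1)) : B ≤ A := by
  by_contra hlt
  push Not at hlt
  rcases Nat.eq_zero_or_pos A with h0 | hA
  · subst h0
    have := h 0
    simp at this
  · have hA' : (0:ℝ) < A := by exact_mod_cast hA
    have h1 : (1:ℝ) < (B:ℝ) / A := by
      rw [one_lt_div hA']; exact_mod_cast hlt
    obtain ⟨m, hm⟩ := pow_unbounded_of_one_lt (A:ℝ) h1
    have h2 : (B:ℝ)^m ≤ (A:ℝ)^(m+1) := by exact_mod_cast h m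
    rw [div_pow, lt_div_iff₀ (by positivity)] at hm
    rw [pow_succ] at h2
    linarith [mul_comm (A:ℝ) ((A:ℝ)^m)]

/-- block map -/
def blk_s14 {Q : Type*} {r : ℕ} (g : (Fin (r+1) → Q) → Q) (n : ℕ) (u : Fin (n+r) → Q) : Fin n → Q :=
  fun j => g (fun i => u ⟨j + i, by omega⟩)

open Classical in
theorem count_ge {Q : Type*} [Fintype Q] [Nonempty Q] {r : ℕ} (g : (Fin (r+1) → Q) → Q)
    (hs : ∀ y : ℕ → Q, ∃ c : ℕ → Q, ∀ z, g (fun i => c (z + i)) = y z)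
    (n : ℕ) (hn : 0 < n) (w : Fin n → Q) :
    Fintype.card Q ^ r ≤ (Finset.univ.filter fun u : Fin (n+r) → Q => blk_s14 g n u = w).card := by
  apply growth
  intro m
  set A := (Finset.univ.filter fun u : Fin (n+r) → Q => blk_s14 g n u = w) with hA
  have hL : 0 < n + r := by omega
  let y : (Fin m → Fin r → Q) → ℕ → Q := fun x z =>
    if h : z % (n+r) < n then w ⟨z % (n+r), h⟩ else
      if h' : z / (n+r) < m then x ⟨z / (n+r), h'⟩ ⟨z % (n+r) - n, by
        have := Nat.mod_lt z hL; omega⟩ else Classical.arbitrary Q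
  have hdm : ∀ i j, j < n + r → (i * (n+r) + j) % (n+r) = j ∧ (i * (n+r) + j) / (n+r) = i := by
    intro i j hj
    constructor
    · rw [Nat.mul_add_mod_self_right, Nat.mod_eq_of_lt hj]
    · rw [mul_comm, Nat.mul_add_div hL, Nat.div_eq_of_lt hj, add_zero]
  have hy1 : ∀ x i (j : Fin n), y x (i * (n+r) + j) = w j := by
    intro x i j
    obtain ⟨e1, e2⟩ := hdm i j (by omega)
    simp only [y, e1, j.2, dif_pos]
  have hy2 : ∀ x (i : Fin m) (j : Fin r), y x (i * (n+r) + (n + j)) = x i j := by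
    intro x i j
    obtain ⟨e1, e2⟩ := hdm i (n+j) (by omega)
    simp only [y, e1, e2]
    simp
  choose c hc using fun x => hs (y x)
  let U : (Fin m → Fin r → Q) → (Fin (m+1) → Fin (n+r) → Q) := fun x i j => c x (i * (n+r) + j)
  have hU : ∀ x, U x ∈ Fintype.piFinset (fun _ : Fin (m+1) => A) := by
    intro x
    rw [Fintype.mem_piFinset]
    intro i
    simp only [hA, Finset.mem_filter, Finset.mem_univ, true_and]
    funext j
    simp only [blk_s14, U]
    rw [← hy1 x i j, ← hc]
    simp only [add_assoc]
  have hcU : ∀ x z, (h : z < (m+1)*(n+r)) → c x z = U x ⟨z / (n+r), by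
      rw [Nat.div_lt_iff_lt_mul hL]; exact h⟩ ⟨z % (n+r), Nat.mod_lt _ hL⟩ := by
    intro x z h
    simp only [U]
    rw [Nat.div_add_mod']
  have hinj : Function.Injective U := by
    intro x x' hxx
    funext i j
    rw [← hy2 x i j, ← hy2 x' i j, ← hc, ← hc]
    congr 1
    funext l
    have hb : (i:ℕ) * (n+r) + (n + j) + l < (m+1)*(n+r) := by
      have h1 : ((i:ℕ)+2) * (n+r) ≤ (m+1)*(n+r) := Nat.mul_le_mul_right _ (by omega)
      have h2 := j.2
      have h3 := l.2
      nlinarith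
    rw [hcU x _ hb, hcU x' _ hb, hxx]
  have := Finset.card_le_card_of_injOn (s := Finset.univ) (t := Fintype.piFinset (fun _ : Fin (m+1) => A)) U
    (fun x _ => hU x) hinj.injOn
  simpa [← pow_mul] using this

open Classical in
theorem count_eq {Q : Type*} [Fintype Q] [Nonempty Q] {r : ℕ} (g : (Fin (r+1) → Q) → Q)
    (hs : ∀ y : ℕ → Q, ∃ c : ℕ → Q, ∀ z, g (fun i => c (z + i)) = y z)
    (n : ℕ) (hn : 0 < n) (w : Fin n → Q) :
    (Finset.univ.filter fun u : Fin (n+r) → Q => blk_s14 g n u = w).card = Fintype.card Q ^ r := by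
  have h1 := Finset.card_eq_sum_card_fiberwise (f := blk_s14 g n) (s := Finset.univ) (t := Finset.univ)
    (fun _ _ => by simp)
  have h2 := (Finset.sum_eq_sum_iff_of_le (s := Finset.univ)
    (fun w (_ : w ∈ Finset.univ) => count_ge g hs n hn w)).1 (by
      rw [← h1]; simp [pow_add])
  exact (h2 w (Finset.mem_univ _)).symm

theorem meas_eq {R : Type*} [Fintype R] [Nonempty R] [MeasurableSpace R] [MeasurableSingletonClass R]
    (μ ν : Measure (ℤ → R)) [IsFiniteMeasure μ] [IsFiniteMeasure ν]
    (h : ∀ (N : ℕ) (g : ℤ → R), μ {s | ∀ i ∈ Finset.Ico (-(N:ℤ)-1) (N+1), s i = g i} =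
      ν {s | ∀ i ∈ Finset.Ico (-(N:ℤ)-1) (N+1), s i = g i}) : μ = ν := by
  refine IsProjectiveLimit.unique (P := fun I => ν.map I.restrict) (fun I => ?_) (fun I => rfl)
  obtain ⟨N, hN⟩ : ∃ N : ℕ, I ⊆ Finset.Ico (-(N:ℤ)-1) (N+1) := by
    refine ⟨I.sup Int.natAbs, fun i hi => ?_⟩
    have : i.natAbs ≤ I.sup Int.natAbs := Finset.le_sup (f := Int.natAbs) hi
    rw [Finset.mem_Ico]
    omega
  set J := Finset.Ico (-(N:ℤ)-1) (N+1) with hJ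
  have hm : μ.map J.restrict = ν.map J.restrict := by
    refine Measure.ext_of_singleton fun w => ?_
    have hmr : Measurable (J.restrict : (ℤ → R) → _) := Finset.measurable_restrict J
    rw [Measure.map_apply hmr (measurableSet_singleton _), Measure.map_apply hmr (measurableSet_singleton _)]
    have e : (J.restrict : (ℤ → R) → _) ⁻¹' {w} = {s | ∀ i ∈ J, s i = 
        (fun i => if hi : i ∈ J then w ⟨i, hi⟩ else Classical.arbitrary R) i} := by
      ext s
      simp only [Set.mem_preimage, Set.mem_singleton_iff, Set.mem_ofPred_eq, funext_iff]
      constructor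
      · intro H i hi
        simpa [hi] using H ⟨i, hi⟩
      · intro H i
        simpa using H i i.2
    rw [e]; exact h N _
  have e2 : (I.restrict : (ℤ → R) → _) = Finset.restrict₂ hN ∘ J.restrict := rfl
  rw [e2, ← Measure.map_map (Finset.measurable_restrict₂ hN) (Finset.measurable_restrict J), hm,
    Measure.map_map (Finset.measurable_restrict₂ hN) (Finset.measurable_restrict J)]
  rfl

theorem local_form {Q : Type*} (Φ : (ℤ → Q) → (ℤ → Q))
    (hΦ : ∃ (V : Finset ℤ) (g : (V → Q) → Q),
      ∀ (c : ℤ → Q) (z : ℤ), Φ c z = g fun v => c (z + (v : ℤ))) :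
    ∃ (r : ℕ) (d : ℤ) (g : (Fin (r+1) → Q) → Q), ∀ c z, Φ c z = g (fun i => c (z + d + (i:ℕ))) := by
  obtain ⟨V, g, h⟩ := hΦ
  have hk : ∀ v : V, (v:ℤ).natAbs ≤ V.sup Int.natAbs := fun v => Finset.le_sup (f := Int.natAbs) v.2
  set k := V.sup Int.natAbs
  refine ⟨2*k, -(k:ℤ), fun u => g (fun v => u ⟨((v:ℤ) + k).toNat, by have := hk v; omega⟩), ?_⟩
  intro c z
  rw [h]
  congr 1
  funext v
  have := hk v
  congr 1
  simp only
  omega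

theorem loc_surj {Q : Type*} [Nonempty Q] (Φ : (ℤ → Q) → (ℤ → Q)) {r : ℕ} {d : ℤ}
    {g : (Fin (r+1) → Q) → Q} (h : ∀ c z, Φ c z = g (fun i => c (z + d + (i:ℕ))))
    (hs : Function.Surjective Φ) :
    ∀ y : ℕ → Q, ∃ c : ℕ → Q, ∀ z, g (fun i => c (z + i)) = y z := by
  intro y
  obtain ⟨c, hc⟩ := hs (fun z => y z.toNat)
  refine ⟨fun n => c (n + d), fun z => ?_⟩
  have := congrFun hc (z:ℤ)
  rw [h] at this
  simp only [Int.toNat_natCast] at this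
  rw [← this]
  congr 1
  funext i
  have e : (((z + (i:ℕ) : ℕ) : ℤ) + d) = (z:ℤ) + d + ((i:ℕ):ℤ) := by
    push_cast
    ring
  simp only [e]

theorem loc_meas {Q : Type*} [Fintype Q] [MeasurableSpace Q] [MeasurableSingletonClass Q]
    (Φ : (ℤ → Q) → (ℤ → Q)) {r : ℕ} {d : ℤ}
    {g : (Fin (r+1) → Q) → Q} (h : ∀ c z, Φ c z = g (fun i => c (z + d + (i:ℕ)))) :
    Measurable Φ := by
  rw [measurable_pi_iff]
  intro z
  simp only [h]
  exact (measurable_of_countable g).comp (measurable_pi_lambda _ fun i => measurable_pi_apply _)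

theorem balance {Q : Type*} [Fintype Q] [Nonempty Q] [MeasurableSpace Q]
    [MeasurableSingletonClass Q]
    (Φ : (ℤ → Q) → (ℤ → Q)) {r : ℕ} {d : ℤ}
    {g : (Fin (r+1) → Q) → Q} (h : ∀ c z, Φ c z = g (fun i => c (z + d + (i:ℕ))))
    (hs : Function.Surjective Φ) (ν : Measure (ℤ → Q)) (hν : IsUniformProduct ν)
    (a : ℤ) (n : ℕ) (hn : 0 < n) (w : ℤ → Q) :
    ν {s | ∀ i ∈ Finset.Ico a (a+n), Φ s i = w i} = (Fintype.card Q : ENNReal)⁻¹ ^ n := by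
  classical
  let ρ : (ℤ → Q) → (Fin (n+r) → Q) := fun s j => s (a + d + (j:ℕ))
  have hρ : Measurable ρ := measurable_pi_lambda _ fun i => measurable_pi_apply _
  have hcnt := count_eq g (loc_surj Φ h hs) n hn (fun j => w (a + (j:ℕ)))
  set A := (Finset.univ.filter fun u : Fin (n+r) → Q => blk_s14 g n u = fun j : Fin n => w (a + (j:ℕ))) with hA
  have e : {s | ∀ i ∈ Finset.Ico a (a+n), Φ s i = w i} = ρ ⁻¹' (A : Set (Fin (n+r) → Q)) := by
    ext s
    simp only [Set.mem_ofPred_eq, Set.mem_preimage, hA, Finset.coe_filter, Finset.mem_univ,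
      true_and, funext_iff, blk_s14, ρ]
    have key : ∀ j : ℕ, Φ s (a + j) = g (fun i => s (a + d + ((j + (i:ℕ) : ℕ) : ℤ))) := by
      intro j
      rw [h]
      congr 1
      funext i
      congr 1
      push_cast
      ring
    constructor
    · intro H j
      rw [← key]
      apply H
      rw [Finset.mem_Ico]
      have := j.2
      omega
    · intro H i hi
      rw [Finset.mem_Ico] at hi
      have := H ⟨(i - a).toNat, by omega⟩
      rw [← key] at this
      simpa [Int.toNat_of_nonneg (show 0 ≤ i - a by omega)] using this
  have hcyl : ∀ u : Fin (n+r) → Q, ν (ρ ⁻¹' {u}) = (Fintype.card Q : ENNReal)⁻¹ ^ (n+r) := by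
    intro u
    have := hν.2 (Finset.Ico (a+d) (a+d+(n+r:ℕ))) (fun i =>
      if hi : (i - (a+d)).toNat < n + r then u ⟨(i - (a+d)).toNat, hi⟩ else Classical.arbitrary Q)
    rw [Int.card_Ico] at this
    have e3 : (a + d + ((n+r:ℕ):ℤ) - (a+d)).toNat = n + r := by omega
    rw [e3] at this
    rw [← this]
    congr 1
    ext s
    simp only [Set.mem_ofPred_eq, Set.mem_preimage, Set.mem_singleton_iff, funext_iff, ρ]
    constructor
    · intro H i hi
      rw [Finset.mem_Ico] at hi
      have hlt : (i - (a+d)).toNat < n + r := by omega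
      rw [dif_pos hlt, ← H]
      congr 1
      simp only
      omega
    · intro H j
      have hj := j.2
      rw [H _ (by rw [Finset.mem_Ico]; omega)]
      have e4 : (a + d + ((j:ℕ):ℤ) - (a+d)).toNat = j := by omega
      simp only [e4, hj, dif_pos]
  rw [e, ← sum_measure_preimage_singleton A (fun u _ => hρ (measurableSet_singleton u))]
  simp only [hcyl, Finset.sum_const, hcnt, nsmul_eq_mul, pow_add, Nat.cast_pow]
  have hq0 : (Fintype.card Q : ENNReal) ≠ 0 := by simp
  rw [mul_comm, mul_assoc, ← mul_pow, ENNReal.inv_mul_cancel hq0 (by simp), one_pow, mul_one]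

theorem surj_of_dense {Q : Type*} [Fintype Q]
    (Φ : (ℤ → Q) → (ℤ → Q)) {r : ℕ} {d : ℤ}
    {g : (Fin (r+1) → Q) → Q} (h : ∀ c z, Φ c z = g (fun i => c (z + d + (i:ℕ))))
    (hd : ∀ (y : ℤ → Q) (t : Finset ℤ), ∃ s, ∀ i ∈ t, Φ s i = y i) : Function.Surjective Φ := by
  letI : TopologicalSpace Q := ⊥
  haveI : DiscreteTopology Q := ⟨rfl⟩
  have hc : Continuous Φ := by
    refine continuous_pi fun z => ?_
    simp only [h]
    exact (continuous_of_discreteTopology (f := g)).comp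
      (continuous_pi fun i => continuous_apply _)
  have hcl : IsClosed (Set.range Φ) := (isCompact_range hc).isClosed
  intro y
  have : y ∈ closure (Set.range Φ) := by
    rw [mem_closure_iff]
    intro o ho hy
    rw [isOpen_pi_iff] at ho
    obtain ⟨I, u, hu, hsub⟩ := ho y hy
    obtain ⟨s, hs⟩ := hd y I
    refine ⟨Φ s, hsub ?_, s, rfl⟩
    intro i hi
    rw [hs i hi]
    exact (hu i hi).2
  rwa [hcl.closure_eq] at this

/-- For a deterministic CA `Φ` on `Q^ℤ` given by a local rule, the correlation-free SCA `G`
on states `Q × Q` with random symbols `Q` defined by `G((c,c'),s)_z = (Φ(c')_z, s_z)`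
satisfies: the two-step stochastic global function of `G` is white noise on every initial
configuration iff `Φ` is surjective, and `G²` is noisy iff `Φ` is surjective. -/
theorem stmt14 {Q : Type*}
    [Fintype Q] [Nonempty Q] [MeasurableSpace Q] [MeasurableSingletonClass Q]
    (Φ : (ℤ → Q) → (ℤ → Q))
    (hΦ : ∃ (V : Finset ℤ) (g : (V → Q) → Q),
      ∀ (c : ℤ → Q) (z : ℤ), Φ c z = g fun v => c (z + (v : ℤ)))
    (G : CFCA (Q × Q) Q)
    (hG : ∀ (x : ℤ → Q × Q) (s : ℤ → Q) (z : ℤ),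
      G.F x s z = (Φ (fun w => (x w).2) z, s z))
    (ν : Measure (ℤ → Q)) (hν : IsUniformProduct ν)
    (ν' : Measure (ℤ → Q × Q)) (hν' : IsUniformProduct ν') :
    ((∀ x : ℤ → Q × Q,
        (ν.prod ν).map (fun p : (ℤ → Q) × (ℤ → Q) => G.F (G.F x p.1) p.2) = ν')
      ↔ Function.Surjective Φ) ∧
    ((∀ x y : ℤ → Q × Q, ∃ s s' : ℤ → Q, G.F (G.F x s) s' = y)
      ↔ Function.Surjective Φ) := by
  obtain ⟨r, d, g, h⟩ := local_form Φ hΦ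
  have hGG : ∀ x s s', G.F (G.F x s) s' = fun z => (Φ s z, s' z) := by
    intro x s s'
    funext z
    rw [hG]
    simp only [hG]
  have hm : Measurable Φ := loc_meas Φ h
  haveI := hν.1
  haveI := hν'.1
  have hmm : Measurable (fun p : (ℤ → Q) × (ℤ → Q) => fun z => (Φ p.1 z, p.2 z)) := by
    refine measurable_pi_lambda _ fun z => ?_
    exact ((measurable_pi_apply z).comp (hm.comp measurable_fst)).prodMk
      ((measurable_pi_apply z).comp measurable_snd)
  have hms : ∀ (t : Finset ℤ) (y : ℤ → Q × Q), MeasurableSet {s : ℤ → Q × Q | ∀ i ∈ t, s i = y i} := by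
    intro t y
    have : {s : ℤ → Q × Q | ∀ i ∈ t, s i = y i} = ⋂ i ∈ t, (fun s => s i) ⁻¹' {y i} := by
      ext s; simp
    rw [this]
    exact Finset.measurableSet_biInter _ fun i _ => measurable_pi_apply i (measurableSet_singleton _)
  have hpre : ∀ (t : Finset ℤ) (y : ℤ → Q × Q),
      ((ν.prod ν).map (fun p : (ℤ → Q) × (ℤ → Q) => fun z => (Φ p.1 z, p.2 z)))
        {s | ∀ i ∈ t, s i = y i} =
      ν {s | ∀ i ∈ t, Φ s i = (y i).1} * ν {s | ∀ i ∈ t, s i = (y i).2} := by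
    intro t y
    rw [Measure.map_apply hmm (hms t y), ← Measure.prod_prod]
    congr 1
    ext p
    simp only [Set.mem_preimage, Set.mem_ofPred_eq, Set.mem_prod, Prod.ext_iff]
    exact ⟨fun H => ⟨fun i hi => (H i hi).1, fun i hi => (H i hi).2⟩,
      fun H i hi => ⟨H.1 i hi, H.2 i hi⟩⟩
  simp only [hGG]
  refine ⟨⟨fun H => ?_, fun hs x => ?_⟩, ⟨fun H y => ?_, fun hs x y => ?_⟩⟩
  · refine surj_of_dense Φ h fun y t => ?_
    have h1 := hpre t (fun i => (y i, y i))
    rw [H (fun i => (y i, y i)), hν'.2] at h1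
    have h2 : ν {s | ∀ i ∈ t, Φ s i = y i} ≠ 0 := by
      intro h0
      simp only [h0, zero_mul] at h1
      exact pow_ne_zero _ (ENNReal.inv_ne_zero.2 (ENNReal.natCast_ne_top _)) h1
    exact nonempty_of_measure_ne_zero h2
  · haveI : IsProbabilityMeasure
      ((ν.prod ν).map (fun p : (ℤ → Q) × (ℤ → Q) => fun z => (Φ p.1 z, p.2 z))) :=
      Measure.isProbabilityMeasure_map hmm.aemeasurable
    refine meas_eq _ _ fun N y => ?_
    have hb := balance Φ h hs ν hν (-(N:ℤ)-1) (2*N+2) (by omega) (fun i => (y i).1)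
    have e1 : -(N:ℤ)-1 + ((2*N+2 : ℕ):ℤ) = N+1 := by push_cast; ring
    rw [e1] at hb
    have e2 : ((N:ℤ)+1 - (-(N:ℤ)-1)).toNat = 2*N+2 := by omega
    rw [hpre, hb, hν.2 _ (fun i => (y i).2), hν'.2, Int.card_Ico, e2, ← mul_pow,
      Fintype.card_prod, Nat.cast_mul, ENNReal.mul_inv (by simp) (by simp)]
  · obtain ⟨s, s', hss⟩ := H (fun z => (y z, y z)) (fun z => (y z, y z))
    exact ⟨s, funext fun z => congrArg Prod.fst (congrFun hss z)⟩
  · obtain ⟨s, hs'⟩ := hs (fun z => (y z).1)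
    refine ⟨s, fun z => (y z).2, ?_⟩
    funext z
    rw [hs']
end

section
/- Let A_1 = (Q,R_1,V_1,V_1',f_1) and A_2 = (Q,R_2,V_2,V_2',f_2) be two one-dimensional stochastic cellular automata with the same state set Q and explicit global functions F_1, F_2, neither of which is deterministic (for each i there exist c, s, s' with F_i(c,s) ≠ F_i(c,s')). If S_{F_1}(c) = S_{F_2}(c) for every configuration c ∈ Q^ℤ, then |R_1| and |R_2| have a common prime factor: there exists a prime p with p ∣ |R_1| and p ∣ |R_2|. -/
open MeasureTheory

open Classical in
lemma SCA.F_apply_measure {Q R : Type*} [MeasurableSpace Q] [MeasurableSingletonClass Q]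
    [Fintype R] [Nonempty R] [MeasurableSpace R] [MeasurableSingletonClass R]
    (A : SCA Q R) (ν : Measure (ℤ → R)) (h : IsUniformProduct ν) (c : ℤ → Q) (z : ℤ) (q : Q) :
    Measurable (A.F c) ∧ (ν.map (A.F c)) {x | x z = q} =
      ((Finset.univ.filter (fun g : A.V' → R => A.f (fun v => c (z + (v : ℤ))) g = q)).card : ENNReal)
        * (Fintype.card R : ENNReal)⁻¹ ^ A.V'.card := by
  have hr : ∀ z : ℤ, Measurable (fun (s : ℤ → R) (v : A.V') => s (z + (v : ℤ))) := fun z =>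
    measurable_pi_lambda _ fun v => measurable_pi_apply _
  have hF : Measurable (A.F c) := by
    refine measurable_pi_lambda _ fun w => ?_
    exact (measurable_of_finite (A.f (fun v => c (w + (v : ℤ))))).comp (hr w)
  refine ⟨hF, ?_⟩
  have hm : MeasurableSet {x : ℤ → Q | x z = q} :=
    measurableSet_preimage (measurable_pi_apply (X := fun _ : ℤ => Q) z)
      (measurableSet_singleton q)
  rw [Measure.map_apply hF hm]
  set G := Finset.univ.filter (fun g : A.V' → R => A.f (fun v => c (z + (v : ℤ))) g = q) with hG
  have e : A.F c ⁻¹' {x | x z = q} =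
      (fun (s : ℤ → R) (v : A.V') => s (z + (v : ℤ))) ⁻¹' (G : Set (A.V' → R)) := by
    ext s
    simp [hG, SCA.F]
  rw [e, ← Measure.map_apply (hr z) (Set.toFinite _).measurableSet, ← sum_measure_singleton]
  rw [Finset.sum_congr rfl (g := fun _ => (Fintype.card R : ENNReal)⁻¹ ^ A.V'.card)]
  · simp
  intro g _
  rw [Measure.map_apply (hr z) (measurableSet_singleton g)]
  have := h.2 (A.V'.image (fun v => z + v))
    (fun i => if hi : i - z ∈ A.V' then g ⟨i - z, hi⟩ else Classical.arbitrary R)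
  rw [Finset.card_image_of_injective _ (add_right_injective z)] at this
  rw [← this]
  congr 1
  ext s
  simp only [Set.mem_preimage, Set.mem_singleton_iff, Finset.mem_image, Set.mem_setOf_eq,
    forall_exists_index, and_imp, forall_apply_eq_imp_iff₂, funext_iff, Subtype.forall]
  refine forall₂_congr fun a ha => ?_
  simp [ha]

/-- If two non-deterministic SCA with the same state set have the same stochastic global
function, then the cardinalities of their random alphabets share a prime factor. -/
theorem stmt15 {Q R1 R2 : Type*}
    [Fintype Q] [Nonempty Q] [MeasurableSpace Q] [MeasurableSingletonClass Q]
    [Fintype R1] [Nonempty R1] [MeasurableSpace R1] [MeasurableSingletonClass R1]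
    [Fintype R2] [Nonempty R2] [MeasurableSpace R2] [MeasurableSingletonClass R2]
    (A1 : SCA Q R1) (A2 : SCA Q R2)
    (hnd1 : ∃ (c : ℤ → Q) (s s' : ℤ → R1), A1.F c s ≠ A1.F c s')
    (hnd2 : ∃ (c : ℤ → Q) (s s' : ℤ → R2), A2.F c s ≠ A2.F c s')
    (ν1 : Measure (ℤ → R1)) (ν2 : Measure (ℤ → R2))
    (h1 : IsUniformProduct ν1) (h2 : IsUniformProduct ν2)
    (heq : ∀ c : ℤ → Q, ν1.map (A1.F c) = ν2.map (A2.F c)) :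
    ∃ p : ℕ, p.Prime ∧ p ∣ Fintype.card R1 ∧ p ∣ Fintype.card R2 := by
  classical
  obtain ⟨c, s, s', hne⟩ := hnd1
  obtain ⟨z, hz⟩ := Function.ne_iff.mp hne
  obtain ⟨-, e1⟩ := A1.F_apply_measure ν1 h1 c z (A1.F c s z)
  obtain ⟨-, e2⟩ := A2.F_apply_measure ν2 h2 c z (A1.F c s z)
  rw [heq c, e2] at e1
  set G1 := Finset.univ.filter
    (fun g : A1.V' → R1 => A1.f (fun v => c (z + (v : ℤ))) g = A1.F c s z) with hG1
  set G2 := Finset.univ.filter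
    (fun g : A2.V' → R2 => A2.f (fun v => c (z + (v : ℤ))) g = A1.F c s z) with hG2
  have hpos : 0 < G1.card := Finset.card_pos.mpr
    ⟨fun v => s (z + (v : ℤ)), by
      rw [hG1, Finset.mem_filter]; exact ⟨Finset.mem_univ _, rfl⟩⟩
  have hlt : G1.card < Fintype.card R1 ^ A1.V'.card := by
    have : G1.card < (Finset.univ : Finset (A1.V' → R1)).card := by
      refine Finset.card_lt_card (Finset.ssubset_univ_iff.mpr fun hu => ?_)
      have := Finset.mem_univ (fun v : A1.V' => s' (z + (v : ℤ)))
      rw [← hu, hG1, Finset.mem_filter] at this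
      exact hz this.2.symm
    simpa using this
  have key : G2.card * Fintype.card R1 ^ A1.V'.card
      = G1.card * Fintype.card R2 ^ A2.V'.card := by
    have e3 := congrArg ENNReal.toReal e1
    simp only [ENNReal.toReal_mul, ENNReal.toReal_pow, ENNReal.toReal_inv,
      ENNReal.toReal_natCast] at e3
    have p1 : (Fintype.card R1 : ℝ) ≠ 0 := by simp
    have p2 : (Fintype.card R2 : ℝ) ≠ 0 := by simp
    rw [inv_pow, inv_pow, ← div_eq_mul_inv, ← div_eq_mul_inv,
      div_eq_div_iff (pow_ne_zero _ p2) (pow_ne_zero _ p1)] at e3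
    exact_mod_cast e3
  by_contra hcon
  have hcop : Nat.Coprime (Fintype.card R1) (Fintype.card R2) := by
    refine Nat.coprime_of_dvd fun p hp ha hb => hcon ⟨p, hp, ha, hb⟩
  have hd : Fintype.card R1 ^ A1.V'.card ∣ G1.card :=
    (Nat.Coprime.pow _ _ hcop).dvd_of_dvd_mul_right ⟨G2.card, by rw [← key, mul_comm]⟩
  exact absurd (Nat.le_of_dvd hpos hd) (not_le.mpr hlt)
end

section
/- For every one-dimensional stochastic cellular automaton A = (Q,R,V,V',f) with explicit global function F_A, there exists a correlation-free stochastic cellular automaton B with state set Q_B = Q ⊕ (Q × R), random symbols R, and explicit global function F_B such that, writing I : Q^ℤ → Q_B^ℤ for the cell-by-cell extension of the left injection i : Q → Q_B: (1) the image I(Q^ℤ) is stable under two steps of B, i.e. for every c ∈ Q^ℤ and all s, s' ∈ R^ℤ, F_B(F_B(I(c),s),s') ∈ I(Q^ℤ); and (2) the two-step dynamics of B restricted to I(Q^ℤ) reproduces the stochastic global function of A: for every c ∈ Q^ℤ, the pushforward of ν_R ⊗ ν_R under (s,s') ↦ F_B(F_B(I(c),s),s') equals the pushforward of ν_R under s ↦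 I(F_A(c,s)). -/
open MeasureTheory

/-- Every SCA `A` on `(Q,R)` is simulated, in two steps and in restriction to the image of
the cell-by-cell injection `I : Q^ℤ → (Q ⊕ Q×R)^ℤ`, by a correlation-free SCA `B` on states
`Q ⊕ Q × R` and random symbols `R`. -/
theorem stmt16 {Q R : Type*}
    [Fintype Q] [Nonempty Q] [MeasurableSpace Q] [MeasurableSingletonClass Q]
    [Fintype R] [Nonempty R] [MeasurableSpace R] [MeasurableSingletonClass R]
    (A : SCA Q R) (ν : Measure (ℤ → R)) (hν : IsUniformProduct ν) :
    ∃ B : CFCA (Q ⊕ Q × R) R,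
      (∀ (c : ℤ → Q) (s s' : ℤ → R),
        B.F (B.F (fun z => Sum.inl (c z)) s) s' ∈
          Set.range fun (c' : ℤ → Q) (z : ℤ) => (Sum.inl (c' z) : Q ⊕ Q × R)) ∧
      (∀ c : ℤ → Q,
        (ν.prod ν).map
            (fun p : (ℤ → R) × (ℤ → R) => B.F (B.F (fun z => Sum.inl (c z)) p.1) p.2)
          = ν.map fun s => fun z => (Sum.inl (A.F c s z) : Q ⊕ Q × R)) := by
  classical
  let fs : Q ⊕ Q × R → Q := fun x => Sum.elim id Prod.fst x
  let sn : Q ⊕ Q × R → R := fun x => Sum.elim (fun _ => Classical.arbitrary R) Prod.snd x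
  let B : CFCA (Q ⊕ Q × R) R :=
    { V := insert 0 (A.V ∪ A.V')
      f := fun x r =>
        Sum.elim (fun q => Sum.inr (q, r))
          (fun _ => Sum.inl (A.f
            (fun v => fs (x ⟨v, Finset.mem_insert_of_mem (Finset.mem_union_left _ v.2)⟩))
            (fun v => sn (x ⟨v, Finset.mem_insert_of_mem (Finset.mem_union_right _ v.2)⟩))))
          (x ⟨0, Finset.mem_insert_self _ _⟩) }
  have key : ∀ (c : ℤ → Q) (s s' : ℤ → R),
      B.F (B.F (fun z => Sum.inl (c z)) s) s' = fun z => Sum.inl (A.F c s z) := by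
    intro c s s'
    funext z
    simp [B, CFCA.F, SCA.F, fs, sn]
  refine ⟨B, fun c s s' => ⟨A.F c s, (key c s s').symm⟩, fun c => ?_⟩
  have := hν.1
  have hm : Measurable (fun s : ℤ → R => fun z => (Sum.inl (A.F c s z) : Q ⊕ Q × R)) := by
    refine measurable_pi_lambda _ fun z => measurable_inl.comp ?_
    have h1 : Measurable (fun t : A.V' → R => A.f (fun v => c (z + (v : ℤ))) t) :=
      measurable_of_finite _
    have h2 : Measurable (fun (s : ℤ → R) (v : A.V') => s (z + (v : ℤ))) :=
      measurable_pi_lambda _ fun v => measurable_pi_apply _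
    exact h1.comp h2
  have e : (fun p : (ℤ → R) × (ℤ → R) => B.F (B.F (fun z => Sum.inl (c z)) p.1) p.2)
      = (fun s : ℤ → R => fun z => (Sum.inl (A.F c s z) : Q ⊕ Q × R)) ∘ Prod.fst := by
    funext p
    exact key c p.1 p.2
  rw [e, ← Measure.map_map hm measurable_fst, Measure.map_fst_prod]
  simp
end

section
/- Let A be a one-dimensional stochastic cellular automaton with state set Q, random symbols R, and explicit global function F. Let π : Q → Q'' be a surjection that is F-compatible (whenever Π(c_1) = Π(c_2) then Π(F(c_1,s)) = Π(F(c_2,s)) for all s, where Π is the cell-by-cell extension of π), with projected global function F_π : Q''^ℤ × R^ℤ → Q''^ℤ defined by F_π(c'',s) = Π(F(c,s)) for any c with Π(c) = c''. Let i : Q' → Q'' be an injection such that (i(Q'))^ℤ is stable under F_π, with restricted global function (F_π)_i(c',s) = I^{-1}(F_π(I(c'),s)) where I is the cell-by-cell extension of i. Then there exist a finite set Q_1, an injection j : Q_1 → Q such that (j(Q_1))^ℤ is stable under F, and a surjection π' : Q_1 → Q' that is compatible with the restricted global function F_j, such that the projection by π' of the restriction F_j equals the restriction by i of the projection F_π: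 (F_j)_{π'}(c',s) = (F_π)_i(c',s) for all c' ∈ Q'^ℤ and s ∈ R^ℤ. -/
open MeasureTheory

/-- Any restriction (by an injection `i`) of a projection (by a compatible surjection `π`)
of an SCA is the projection (by a compatible surjection `π'`) of some restriction
(by an injection `j` with stable image) of that SCA. -/
theorem stmt17 {Q Q' Q'' R : Type} [Fintype Q] [Nonempty Q]
    [Fintype Q'] [Fintype Q''] [Fintype R] [Nonempty R]
    (A : SCA Q R)
    (π : Q → Q'') (hπsurj : Function.Surjective π)
    (hπcomp : ∀ c1 c2 : ℤ → Q, π ∘ c1 = π ∘ c2 →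
      ∀ s : ℤ → R, π ∘ A.F c1 s = π ∘ A.F c2 s)
    (Fπ : (ℤ → Q'') → (ℤ → R) → (ℤ → Q''))
    (hFπ : ∀ (c : ℤ → Q) (s : ℤ → R), Fπ (π ∘ c) s = π ∘ A.F c s)
    (i : Q' → Q'') (hi : Function.Injective i)
    (histable : ∀ (c' : ℤ → Q') (s : ℤ → R), ∃ d' : ℤ → Q', Fπ (i ∘ c') s = i ∘ d')
    (Fπi : (ℤ → Q') → (ℤ → R) → (ℤ → Q'))
    (hFπi : ∀ (c' : ℤ → Q') (s : ℤ → R), i ∘ Fπi c' s = Fπ (i ∘ c') s) :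
    ∃ (Q1 : Type) (_ : Fintype Q1) (j : Q1 → Q) (π' : Q1 → Q'),
      Function.Injective j ∧
      (∀ (c1 : ℤ → Q1) (s : ℤ → R), ∃ d1 : ℤ → Q1, A.F (j ∘ c1) s = j ∘ d1) ∧
      Function.Surjective π' ∧
      (∀ c1 c2 : ℤ → Q1, π' ∘ c1 = π' ∘ c2 →
        ∀ (s : ℤ → R) (d1 d2 : ℤ → Q1),
          A.F (j ∘ c1) s = j ∘ d1 → A.F (j ∘ c2) s = j ∘ d2 → π' ∘ d1 = π' ∘ d2) ∧
      (∀ (c1 : ℤ → Q1) (s : ℤ → R) (d1 : ℤ → Q1),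
        A.F (j ∘ c1) s = j ∘ d1 → π' ∘ d1 = Fπi (π' ∘ c1) s) := by
  classical
  have key : ∀ (c1 : ℤ → {q : Q // ∃ q', i q' = π q}) (s : ℤ → R),
      π ∘ A.F (Subtype.val ∘ c1) s = i ∘ Fπi (fun z => (c1 z).2.choose) s := by
    intro c1 s
    rw [hFπi, ← hFπ]
    congr 1
    funext z
    exact (c1 z).2.choose_spec.symm
  have key2 : ∀ (c1 : ℤ → {q : Q // ∃ q', i q' = π q}) (s : ℤ → R)
      (d1 : ℤ → {q : Q // ∃ q', i q' = π q}),
      A.F (Subtype.val ∘ c1) s = Subtype.val ∘ d1 →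
      (fun q : {q : Q // ∃ q', i q' = π q} => q.2.choose) ∘ d1
        = Fπi ((fun q : {q : Q // ∃ q', i q' = π q} => q.2.choose) ∘ c1) s := by
    intro c1 s d1 h
    have hk := key c1 s
    rw [h] at hk
    funext z
    apply hi
    exact (d1 z).2.choose_spec.trans (congrFun hk z)
  refine ⟨{q : Q // ∃ q', i q' = π q}, inferInstance, Subtype.val, fun q => q.2.choose,
    Subtype.val_injective, ?_, ?_, ?_, key2⟩
  · intro c1 s
    exact ⟨fun z => ⟨A.F (Subtype.val ∘ c1) s z, _, (congrFun (key c1 s) z).symm⟩, rfl⟩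
  · intro q'
    obtain ⟨q, hq⟩ := hπsurj (i q')
    refine ⟨⟨q, q', hq.symm⟩, hi ?_⟩
    have h : ∃ x, i x = π q := ⟨q', hq.symm⟩
    exact h.choose_spec.trans hq
  · intro c1 c2 h s d1 d2 h1 h2
    rw [key2 c1 s d1 h1, key2 c2 s d2 h2, h]
end

section
/- Let A = (S, Σ, (M_a)_{a∈Σ}, I, Fin) be a probabilistic finite automaton with finite state set S, finite alphabet Σ, initial state I ∈ S, final states Fin ⊆ S, and for each a ∈ Σ a stochastic matrix M_a ∈ [0,1]^{S×S} with rational entries (each row sums to 1). Let m be the least common multiple of the denominators of all transition probabilities, and for u ∈ Σ^n define the acceptance probability P_A(u) = Σ over (q_0,…,q_n) ∈ S^{n+1} with q_0 = I and q_n ∈ Fin of ∏_{i=1}^n M_{u_i}(q_{i-1},q_i). Then there exists a one-dimensional stochastic cellular automaton F with state set Q_F = Σ ⊔ {▷, →, ✓, ⊥} and random symbol set R_F = S × {1,…,m} such that for all n ≥ 1 and all configurations c ∈ Q_F^ℤ: (1) S_F(c)([▷·→^n·✓]_0) = 0 if c ∉ [▷·Σ^n·✓]_0; and (2) S_F(c)([▷·→^n·✓]_0)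 = P_A(u)/|S|^n if c ∈ [▷·u·✓]_0 for a word u ∈ Σ^n. -/
open MeasureTheory

/-- The least common multiple of the denominators of all transition probabilities
of a probabilistic finite automaton with transition matrices `M`. -/
def lcmDen {Γ S : Type} [Fintype Γ] [Fintype S] (M : Γ → S → S → ℚ) : ℕ :=
  Finset.univ.lcm fun p : Γ × S × S => (M p.1 p.2.1 p.2.2).den

/-- The acceptance probability of the word `u` by the probabilistic finite automaton with
transition matrices `M`, initial state `I` and final states `Fin'`:  the sum over all
accepting paths of the products of the transition probabilities along the path. -/
def pAccept {Γ S : Type} [Fintype S] [DecidableEq S] (M : Γ → S → S → ℚ)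
    (I : S) (Fin' : Finset S) {n : ℕ} (u : Fin n → Γ) : ℚ :=
  ∑ q : Fin (n + 1) → S,
    if q 0 = I ∧ q (Fin.last n) ∈ Fin' then
      ∏ i : Fin n, M (u i) (q i.castSucc) (q i.succ)
    else 0

namespace Stmt18

/-- Local rule. -/
def loc {Γ S : Type} [DecidableEq S] {m : ℕ} (M : Γ → S → S → ℚ) (I : S) (Fin' : Finset S) :
    (Γ ⊕ Fin 4) → (Γ ⊕ Fin 4) → (S × Fin m) → (S × Fin m) → Γ ⊕ Fin 4
  | _, Sum.inr x, r, _ =>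
      if x = 0 then Sum.inr 0 else if x = 2 ∧ r.1 ∈ Fin' then Sum.inr 2 else Sum.inr 3
  | Sum.inl _, Sum.inl a, r, r' =>
      if (r'.2.val : ℚ) < m * M a r.1 r'.1 then Sum.inr 1 else Sum.inr 3
  | Sum.inr x, Sum.inl a, _, r' =>
      if x = 0 ∧ (r'.2.val : ℚ) < m * M a I r'.1 then Sum.inr 1 else Sum.inr 3

/-- The automaton. -/
def aut {Γ S : Type} [DecidableEq S] (m : ℕ) (M : Γ → S → S → ℚ) (I : S) (Fin' : Finset S) :
    SCA (Γ ⊕ Fin 4) (S × Fin m) where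
  V := {-1, 0}
  V' := {-1, 0}
  f v w := loc M I Fin' (v ⟨-1, by simp⟩) (v ⟨0, by simp⟩) (w ⟨-1, by simp⟩) (w ⟨0, by simp⟩)

/-- Acceptance of a random word. -/
def acc {Γ S : Type} {m n : ℕ} (M : Γ → S → S → ℚ) (I : S) (Fin' : Finset S)
    (u : Fin n → Γ) (qs : Fin n → S) (ks : Fin n → Fin m) : Prop :=
  (Fin.cons I qs : Fin (n+1) → S) (Fin.last n) ∈ Fin' ∧
    ∀ j : Fin n, ((ks j).val : ℚ) <
      m * M (u j) ((Fin.cons I qs : Fin (n+1) → S) j.castSucc) (qs j)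

section
variable {Γ S : Type} [DecidableEq S] {m : ℕ} (M : Γ → S → S → ℚ) (I : S) (Fin' : Finset S)

theorem F_apply (c : ℤ → Γ ⊕ Fin 4) (s : ℤ → S × Fin m) (z : ℤ) :
    (aut m M I Fin').F c s z = loc M I Fin' (c (z - 1)) (c z) (s (z - 1)) (s z) := by
  simp [SCA.F, aut, sub_eq_add_neg]

theorem loc_eq_zero {p x : Γ ⊕ Fin 4} {r r' : S × Fin m}
    (h : loc M I Fin' p x r r' = Sum.inr 0) : x = Sum.inr 0 := by
  rcases p with p | p <;> rcases x with x | x <;> simp only [loc] at h <;> split_ifs at h <;> simp_all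

theorem loc_eq_one {p x : Γ ⊕ Fin 4} {r r' : S × Fin m}
    (h : loc M I Fin' p x r r' = Sum.inr 1) : ∃ a, x = Sum.inl a := by
  rcases p with p | p <;> rcases x with x | x <;> simp only [loc] at h <;> split_ifs at h <;> simp_all

theorem loc_eq_two {p x : Γ ⊕ Fin 4} {r r' : S × Fin m}
    (h : loc M I Fin' p x r r' = Sum.inr 2) : x = Sum.inr 2 := by
  rcases p with p | p <;> rcases x with x | x <;> simp only [loc] at h <;> split_ifs at h <;> simp_all

theorem F_iff (n : ℕ) (hn : 1 ≤ n) (c : ℤ → Γ ⊕ Fin 4) (s : ℤ → S × Fin m) (u : Fin n → Γ)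
    (h0 : c 0 = Sum.inr 0) (h1 : ∀ j : Fin n, c (1 + (j : ℤ)) = Sum.inl (u j))
    (h2 : c (1 + (n : ℤ)) = Sum.inr 2) :
    ((aut m M I Fin').F c s 0 = Sum.inr 0 ∧
      (∀ j : Fin n, (aut m M I Fin').F c s (1 + (j : ℤ)) = Sum.inr 1) ∧
      (aut m M I Fin').F c s (1 + (n : ℤ)) = Sum.inr 2) ↔
    acc M I Fin' u (fun j => (s (1 + (j : ℤ))).1) (fun j => (s (1 + (j : ℤ))).2) := by
  obtain ⟨k, rfl⟩ : ∃ k, n = k + 1 := ⟨n - 1, by omega⟩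
  simp only [F_apply, acc]
  have e0 : loc M I Fin' (c (0 - 1)) (c 0) (s (0 - 1)) (s 0) = Sum.inr 0 := by
    rw [h0]; rcases c (0-1) with p | p <;> simp [loc]
  have e2 : loc M I Fin' (c (1 + ((k+1 : ℕ) : ℤ) - 1)) (c (1 + ((k+1 : ℕ) : ℤ)))
      (s (1 + ((k+1 : ℕ) : ℤ) - 1)) (s (1 + ((k+1 : ℕ) : ℤ))) = Sum.inr 2 ↔
      (Fin.cons I (fun j : Fin (k+1) => (s (1 + (j : ℤ))).1) : Fin (k+1+1) → S)
        (Fin.last (k+1)) ∈ Fin' := by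
    rw [h2]
    have : (1 + ((k+1 : ℕ) : ℤ) - 1) = 1 + (k : ℤ) := by push_cast; ring
    rw [this, ← Fin.succ_last, Fin.cons_succ]
    rcases c (1 + (k : ℤ)) with p | p <;> simp [loc]
  rw [e2]
  have e1 : ∀ j : Fin (k+1), loc M I Fin' (c (1 + (j : ℤ) - 1)) (c (1 + (j : ℤ)))
      (s (1 + (j : ℤ) - 1)) (s (1 + (j : ℤ))) = Sum.inr 1 ↔ 
      ((s (1 + (j : ℤ))).2.val : ℚ) <
      m * M (u j) ((Fin.cons I (fun j : Fin (k+1) => (s (1 + (j : ℤ))).1) : Fin (k+1+1) → S)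
        j.castSucc) (s (1 + (j : ℤ))).1 := by
    intro j
    rw [h1 j]
    refine Fin.cases ?_ (fun i => ?_) j
    · have : (1 + (((0 : Fin (k+1)) : ℕ) : ℤ) - 1) = 0 := by simp
      rw [this, h0]
      simp [loc]
    · have : (1 + ((i.succ : ℕ) : ℤ) - 1) = 1 + ((i.castSucc : ℕ) : ℤ) := by simp; ring
      rw [this, h1 i.castSucc, ← Fin.succ_castSucc, Fin.cons_succ]
      simp only [loc]
      split_ifs with h
      · exact iff_of_true rfl h
      · exact iff_of_false (by simp) h
  simp only [e1, e0, true_and]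
  exact and_comm

theorem count_one [Fintype Γ] [Fintype S]
    (hM0 : ∀ a q1 q2, 0 ≤ M a q1 q2) (hM1 : ∀ a q1, ∑ q2, M a q1 q2 = 1) (a : Γ) (q q' : S) :
    (∑ k : Fin (lcmDen M), if (k.val : ℚ) < (lcmDen M : ℕ) * M a q q' then (1 : ℚ) else 0)
      = (lcmDen M : ℕ) * M a q q' := by
  have hle : M a q q' ≤ 1 := by
    rw [← hM1 a q]
    exact Finset.single_le_sum (f := fun q2 => M a q q2) (fun i _ => hM0 a q i) (Finset.mem_univ q')
  have hd : (M a q q').den ∣ lcmDen M :=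
    Finset.dvd_lcm (f := fun p : Γ × S × S => (M p.1 p.2.1 p.2.2).den) (Finset.mem_univ (a, q, q'))
  obtain ⟨r, hr⟩ : ∃ r : ℕ, (lcmDen M : ℚ) * M a q q' = r := by
    obtain ⟨d, hd⟩ := hd
    have hnum : ((M a q q').num.toNat : ℤ) = (M a q q').num :=
      Int.toNat_of_nonneg (Rat.num_nonneg.mpr (hM0 a q q'))
    refine ⟨d * (M a q q').num.toNat, ?_⟩
    have h3 : (((M a q q').num.toNat : ℕ) : ℚ) = (M a q q').num := by exact_mod_cast hnum
    rw [Nat.cast_mul, h3, hd, ← Rat.mul_den_eq_num]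
    push_cast; ring
  have hrm : r ≤ lcmDen M := by
    have : (r : ℚ) ≤ lcmDen M := by
      rw [← hr]; exact mul_le_of_le_one_right (by positivity) hle
    exact_mod_cast this
  rw [hr]
  simp only [Nat.cast_lt]
  rw [Fin.sum_univ_eq_sum_range (fun k => if k < r then (1 : ℚ) else 0)]
  rw [← Finset.sum_filter]
  have : (Finset.range (lcmDen M)).filter (fun k => k < r) = Finset.range r := by
    ext x; simp; omega
  simp [this]

open Classical in
theorem count_acc [Fintype Γ] [Fintype S]
    (hM0 : ∀ a q1 q2, 0 ≤ M a q1 q2) (hM1 : ∀ a q1, ∑ q2, M a q1 q2 = 1)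
    {n : ℕ} (u : Fin n → Γ) :
    (((Finset.univ.filter (fun w : Fin n → S × Fin (lcmDen M) =>
      acc M I Fin' u (fun j => (w j).1) (fun j => (w j).2))).card : ℕ) : ℚ)
      = (lcmDen M : ℚ) ^ n * pAccept M I Fin' u := by
  rw [Finset.card_filter]
  push_cast
  rw [← Equiv.sum_comp (Equiv.arrowProdEquivProdArrow (Fin n) (fun _ => S)
    (fun _ => Fin (lcmDen M))).symm, Fintype.sum_prod_type]
  rw [pAccept, ← Equiv.sum_comp (Fin.consEquiv (fun _ : Fin (n+1) => S)), Fintype.sum_prod_type,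
    Finset.sum_eq_single I]
  rotate_left
  · intro b _ hb
    simp [Fin.consEquiv, hb]
  · simp
  rw [Finset.mul_sum]
  refine Finset.sum_congr rfl fun qs _ => ?_
  simp only [Fin.consEquiv, Equiv.coe_fn_mk, Fin.cons_zero, true_and, Fin.cons_succ,
    Equiv.arrowProdEquivProdArrow, Equiv.coe_fn_symm_mk, acc]
  by_cases hl : (Fin.cons I qs : Fin (n+1) → S) (Fin.last n) ∈ Fin'
  · simp only [hl, true_and, if_true]
    have h := Finset.prod_univ_sum (fun _ : Fin n => (Finset.univ : Finset (Fin (lcmDen M))))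
      (fun j k => if (k.val : ℚ) < (lcmDen M : ℕ) *
        M (u j) ((Fin.cons I qs : Fin (n+1) → S) j.castSucc) (qs j) then (1 : ℚ) else 0)
    simp only [count_one M hM0 hM1, Fintype.piFinset_univ] at h
    rw [Finset.prod_mul_distrib] at h
    simp only [Finset.prod_const, Finset.card_univ, Fintype.card_fin] at h
    rw [h]
    refine Finset.sum_congr rfl fun ks _ => ?_
    rw [Finset.prod_ite_zero]
    simp
  · simp [hl]

end

open Classical in
theorem nu_count {R : Type} [Fintype R] [Nonempty R] [MeasurableSpace R]
    [MeasurableSingletonClass R] (ν : Measure (ℤ → R)) (hν : IsUniformProduct ν) (n : ℕ)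
    (P : (Fin n → R) → Prop) :
    ν {s | P (fun j : Fin n => s (1 + (j : ℤ)))} =
      ((Finset.univ.filter P).card : ENNReal) * (Fintype.card R : ENNReal)⁻¹ ^ n := by
  have hinj : Function.Injective (fun j : Fin n => 1 + (j : ℤ)) := by
    intro a b h; ext; simpa using h
  have hset : {s : ℤ → R | P (fun j : Fin n => s (1 + (j : ℤ)))} =
      ⋃ w ∈ Finset.univ.filter P, {s | (fun j : Fin n => s (1 + (j : ℤ))) = w} := by
    ext s; simp
  have hm : Measurable (fun (s : ℤ → R) (j : Fin n) => s (1 + (j : ℤ))) := by fun_prop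
  rw [hset, measure_biUnion_finset]
  · rw [Finset.sum_congr rfl (g := fun _ => (Fintype.card R : ENNReal)⁻¹ ^ n)]
    · simp
    · intro w _
      have := hν.2 (Finset.univ.image (fun j : Fin n => 1 + (j : ℤ)))
        (Function.extend (fun j : Fin n => 1 + (j : ℤ)) w (fun _ => Classical.arbitrary R))
      rw [Finset.card_image_of_injective _ hinj] at this
      simp only [Finset.card_univ, Fintype.card_fin] at this
      rw [← this]
      congr 1
      ext s
      simp only [Set.mem_ofPred_eq, Finset.mem_image, Finset.mem_univ, true_and,
        forall_exists_index, forall_apply_eq_imp_iff, funext_iff]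
      refine forall_congr' fun j => ?_
      rw [hinj.extend_apply]
  · intro a _ b _ hab
    refine Set.disjoint_left.mpr fun s hs hs' => hab ?_
    exact hs.symm.trans hs'
  · intro w _
    exact hm (measurableSet_singleton w)

end Stmt18

/-- Encoding of probabilistic finite automata into stochastic CA: for any PFA with rational
transition probabilities there is an SCA with states `Σ ⊔ {▷,→,✓,⊥}` (here `▷,→,✓,⊥` are
`Sum.inr 0, Sum.inr 1, Sum.inr 2, Sum.inr 3`) and random symbols `S × {1,…,m}` such that,
for every `n ≥ 1`, the pattern `▷·→ⁿ·✓` appears at position `0` in the image of `c` with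
probability `0` if `c ∉ [▷·Σⁿ·✓]₀`, and with probability `P_A(u)/|S|ⁿ` if
`c ∈ [▷·u·✓]₀` for a word `u ∈ Σⁿ`. -/
theorem stmt18 {Γ S : Type}
    [Fintype Γ] [Nonempty Γ] [MeasurableSpace Γ] [MeasurableSingletonClass Γ]
    [Fintype S] [Nonempty S] [DecidableEq S]
    [MeasurableSpace S] [MeasurableSingletonClass S]
    (M : Γ → S → S → ℚ)
    (hM0 : ∀ a q1 q2, 0 ≤ M a q1 q2)
    (hM1 : ∀ a q1, ∑ q2, M a q1 q2 = 1)
    (I : S) (Fin' : Finset S) :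
    ∃ F : SCA (Γ ⊕ Fin 4) (S × Fin (lcmDen M)),
      ∀ ν : Measure (ℤ → S × Fin (lcmDen M)), IsUniformProduct ν →
        ∀ n : ℕ, 1 ≤ n → ∀ c : ℤ → Γ ⊕ Fin 4,
          ((¬ (c 0 = Sum.inr 0 ∧ (∀ j : Fin n, ∃ a : Γ, c (1 + (j : ℤ)) = Sum.inl a) ∧
                c (1 + (n : ℤ)) = Sum.inr 2)) →
            ν.map (F.F c)
              {x : ℤ → Γ ⊕ Fin 4 | x 0 = Sum.inr 0 ∧
                (∀ j : Fin n, x (1 + (j : ℤ)) = Sum.inr 1) ∧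
                x (1 + (n : ℤ)) = Sum.inr 2} = 0) ∧
          (∀ u : Fin n → Γ,
            c 0 = Sum.inr 0 → (∀ j : Fin n, c (1 + (j : ℤ)) = Sum.inl (u j)) →
            c (1 + (n : ℤ)) = Sum.inr 2 →
            ν.map (F.F c)
              {x : ℤ → Γ ⊕ Fin 4 | x 0 = Sum.inr 0 ∧
                (∀ j : Fin n, x (1 + (j : ℤ)) = Sum.inr 1) ∧
                x (1 + (n : ℤ)) = Sum.inr 2}
              = ENNReal.ofReal ((pAccept M I Fin' u : ℚ) : ℝ)
                  / (Fintype.card S : ENNReal) ^ n) := by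
  classical
  have hm : 0 < lcmDen M := by
    refine Nat.pos_of_ne_zero fun h => ?_
    rw [lcmDen, Finset.lcm_eq_zero_iff] at h
    simp at h
  have : Nonempty (Fin (lcmDen M)) := ⟨⟨0, hm⟩⟩
  refine ⟨Stmt18.aut (lcmDen M) M I Fin', fun ν hν n hn c => ?_⟩
  have hF : Measurable ((Stmt18.aut (lcmDen M) M I Fin').F c) := by
    refine measurable_pi_lambda _ fun z => ?_
    simp only [Stmt18.F_apply]
    have h1 : Measurable (fun p : (S × Fin (lcmDen M)) × (S × Fin (lcmDen M)) =>
      Stmt18.loc M I Fin' (c (z - 1)) (c z) p.1 p.2) := measurable_of_finite _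
    have h2 : Measurable (fun s : ℤ → S × Fin (lcmDen M) => (s (z - 1), s z)) := by fun_prop
    exact h1.comp h2
  have : MeasurableSingletonClass (Γ ⊕ Fin 4) := by
    refine ⟨fun x => ?_⟩
    rcases x with x | x
    · rw [← Set.image_singleton]
      exact MeasurableSet.inl_image (measurableSet_singleton x)
    · rw [← Set.image_singleton]
      exact (measurableSet_singleton x).inr_image
  have hev : ∀ (z : ℤ) (y : Γ ⊕ Fin 4), MeasurableSet {x : ℤ → Γ ⊕ Fin 4 | x z = y} :=
    fun z y => by
      have h : Measurable (fun x : ℤ → Γ ⊕ Fin 4 => x z) := measurable_pi_apply z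
      exact measurableSet_preimage h (measurableSet_singleton y)
  have hS : MeasurableSet {x : ℤ → Γ ⊕ Fin 4 | x 0 = Sum.inr 0 ∧
                (∀ j : Fin n, x (1 + (j : ℤ)) = Sum.inr 1) ∧
                x (1 + (n : ℤ)) = Sum.inr 2} := by
    refine (hev _ _).inter (MeasurableSet.inter ?_ (hev _ _))
    have he : {x : ℤ → Γ ⊕ Fin 4 | ∀ j : Fin n, x (1 + (j : ℤ)) = Sum.inr 1} =
        ⋂ j : Fin n, {x : ℤ → Γ ⊕ Fin 4 | x (1 + (j : ℤ)) = Sum.inr 1} := by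
      ext x; simp
    have hi : MeasurableSet {x : ℤ → Γ ⊕ Fin 4 | ∀ j : Fin n, x (1 + (j : ℤ)) = Sum.inr 1} := by
      rw [he]
      exact MeasurableSet.iInter fun j => hev _ _
    exact hi
  rw [Measure.map_apply hF hS]
  refine ⟨fun hc => ?_, fun u h0 h1 h2 => ?_⟩
  · convert measure_empty (μ := ν)
    refine Set.eq_empty_iff_forall_notMem.mpr fun s hs => hc ?_
    simp only [Set.mem_preimage, Set.mem_ofPred_eq, Stmt18.F_apply] at hs
    exact ⟨Stmt18.loc_eq_zero M I Fin' hs.1, fun j => Stmt18.loc_eq_one M I Fin' (hs.2.1 j),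
      Stmt18.loc_eq_two M I Fin' hs.2.2⟩
  · have hset := Stmt18.nu_count ν hν n (fun w =>
      Stmt18.acc M I Fin' u (fun j => (w j).1) (fun j => (w j).2))
    have hpre : ((Stmt18.aut (lcmDen M) M I Fin').F c) ⁻¹' {x : ℤ → Γ ⊕ Fin 4 | x 0 = Sum.inr 0 ∧
                (∀ j : Fin n, x (1 + (j : ℤ)) = Sum.inr 1) ∧
                x (1 + (n : ℤ)) = Sum.inr 2} = {s | Stmt18.acc M I Fin' u
                  (fun j => (s (1 + (j : ℤ))).1) (fun j => (s (1 + (j : ℤ))).2)} := by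
      ext s
      exact Stmt18.F_iff M I Fin' n hn c s u h0 h1 h2
    rw [hpre, hset]
    have hcount := Stmt18.count_acc M I Fin' hM0 hM1 u
    generalize (Finset.univ.filter (fun w : Fin n → S × Fin (lcmDen M) =>
      Stmt18.acc M I Fin' u (fun j => (w j).1) (fun j => (w j).2))).card = N at hcount ⊢
    have hN : (N : ENNReal) = (lcmDen M : ENNReal) ^ n *
        ENNReal.ofReal ((pAccept M I Fin' u : ℚ) : ℝ) := by
      rw [← ENNReal.ofReal_natCast N, ← ENNReal.ofReal_natCast (lcmDen M),
        ← ENNReal.ofReal_pow (by positivity), ← ENNReal.ofReal_mul (by positivity)]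
      congr 1
      exact_mod_cast hcount
    rw [hN, Fintype.card_prod, Fintype.card_fin]
    have hm0 : (lcmDen M : ENNReal) ≠ 0 := by exact_mod_cast hm.ne'
    have hmt : (lcmDen M : ENNReal) ≠ ⊤ := ENNReal.natCast_ne_top _
    push_cast
    rw [ENNReal.mul_inv (Or.inr hmt) (Or.inr hm0), mul_pow, div_eq_mul_inv, ENNReal.inv_pow]
    have hc1 : (lcmDen M : ENNReal) ^ n * (lcmDen M : ENNReal)⁻¹ ^ n = 1 := by
      rw [← mul_pow, ENNReal.mul_inv_cancel hm0 hmt, one_pow]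
    calc _ = ((lcmDen M : ENNReal) ^ n * (lcmDen M : ENNReal)⁻¹ ^ n) *
          (ENNReal.ofReal ((pAccept M I Fin' u : ℚ) : ℝ) * (Fintype.card S : ENNReal)⁻¹ ^ n) := by
            ring
      _ = _ := by rw [hc1, one_mul]
end
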